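/- arXiv:2604.11475 — 13 statements merged into one kernel-verified Lean document; each statement's English description precedes it below -/
import Mathlib

section
/- Let K be a field, R = K[x,y,z], and m = (x,y,z). Let I ⊂ R be a monomial ideal admitting a primary decomposition I = Q ∩ L in which Q is a primary ideal whose radical is one of (x,y), (x,z), (y,z), L is a primary ideal with radical m, and the decomposition is irredundant (Q ⊄ L and L ⊄ Q). If m ∉ Ass_R(R/I^t) for some integer t ≥ 2, then m ∉ Ass_R(R/I^α) for all α ≥ t. -/
open MvPolynomial

/-- A monomial ideal: an ideal generated by monomials. -/
def IsMonomialIdeal {K : Type*} [Field K] {n : ℕ} (I : Ideal (MvPolynomial (Fin n) K)) : Prop :=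
  ∃ S : Set (Fin n →₀ ℕ), I = Ideal.span ((fun d => monomial d (1 : K)) '' S)

open scoped Pointwise

/-- If `I ≤ Q` and `I ^ t = Q ^ t` for some `t ≥ 1`, then `I` and `Q` have the same powers from
`t` on. -/
theorem Ideal.pow_eq_pow_of_le_of_pow_eq {R : Type*} [CommSemiring R] {I Q : Ideal R}
    (hIQ : I ≤ Q) {t : ℕ} (ht : 1 ≤ t) (h : I ^ t = Q ^ t) {α : ℕ} (hα : t ≤ α) :
    I ^ α = Q ^ α := by
  obtain ⟨s, rfl⟩ := Nat.exists_eq_add_of_le' ht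
  have hred : Q * I ^ s = I ^ (s + 1) := by
    refine le_antisymm ?_ ?_
    · rw [h, pow_succ']
      exact Ideal.mul_mono_right (Ideal.pow_right_mono hIQ s)
    · rw [pow_succ']
      exact Ideal.mul_mono_left hIQ
  induction α, hα using Nat.le_induction with
  | base => exact h
  | succ k hk ih =>
    obtain ⟨j, rfl⟩ := Nat.exists_eq_add_of_le hk
    have hsplit : I ^ (s + 1 + j) = I ^ s * I ^ (j + 1) := by rw [← pow_add]; congr 1; ring
    rw [pow_succ' Q, ← ih, hsplit, ← mul_assoc, hred, ← pow_add]
    congr 1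

/-- In a Noetherian ring, if a power of a maximal ideal `m` multiplies `J` into `I` and
`J ≰ I`, then `m` is an associated prime of `R ⧸ I`. -/
theorem Ideal.mem_associatedPrimes_of_pow_mul_le {R : Type*} [CommRing R] [IsNoetherianRing R]
    {m I J : Ideal R} (hm : m.IsMaximal) {n : ℕ} (hmul : m ^ n * J ≤ I) (hJI : ¬ J ≤ I) :
    m ∈ associatedPrimes R (R ⧸ I) := by
  obtain ⟨f, hfJ, hfI⟩ := SetLike.not_le_iff_exists.mp hJI
  obtain ⟨P, hP, hle⟩ := exists_le_isAssociatedPrime_of_isNoetherianRing R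
    (Ideal.Quotient.mk I f) (by rwa [Ne, Ideal.Quotient.eq_zero_iff_mem])
  have hpow : m ^ n ≤ P := fun g hg ↦ hle <| by
    rw [Submodule.mem_colon_singleton, Submodule.mem_bot, ← Ideal.Quotient.mk_eq_mk,
      ← Submodule.Quotient.mk_smul, Ideal.Quotient.mk_eq_mk, Ideal.Quotient.eq_zero_iff_mem]
    exact hmul (Ideal.mul_mem_mul hg hfJ)
  have hprime := hP.isPrime
  rwa [hm.eq_of_le hprime.ne_top (hprime.le_of_pow_le hpow)]

/-- An element which is a nonzerodivisor modulo `J` lies in no associated prime of `R ⧸ J`. -/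
theorem Ideal.notMem_of_mem_associatedPrimes {R : Type*} [CommRing R] {J P : Ideal R} {z : R}
    (hz : ∀ g, z * g ∈ J → g ∈ J) (hP : P ∈ associatedPrimes R (R ⧸ J)) : z ∉ P := by
  obtain ⟨hprime, x, hx⟩ := hP
  obtain ⟨f, rfl⟩ := Ideal.Quotient.mk_surjective x
  have hmem (r : R) : r ∈ (⊥ : Submodule R (R ⧸ J)).colon {Ideal.Quotient.mk J f} ↔
      r * f ∈ J := by
    rw [Submodule.mem_colon_singleton, Submodule.mem_bot, ← Ideal.Quotient.mk_eq_mk,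
      ← Submodule.Quotient.mk_smul, Ideal.Quotient.mk_eq_mk, Ideal.Quotient.eq_zero_iff_mem,
      smul_eq_mul]
  intro hzP
  rw [hx] at hzP
  obtain ⟨n, hn⟩ := hzP
  rw [hmem] at hn
  have hf : f ∈ J := by
    clear hx
    induction n with
    | zero => simpa using hn
    | succ n ih => exact ih (hz _ (by rwa [← mul_assoc, ← pow_succ']))
  refine hprime.ne_top ((Ideal.eq_top_iff_one _).mpr ?_)
  rw [hx]
  exact Ideal.le_radical ((hmem 1).mpr (by simpa using hf))

namespace MvPolynomial

variable {σ K : Type*}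

/-- The ideal `J` is generated by monomials not involving the variable `X i`. -/
def IsSpanOfMonomialsAvoiding [CommSemiring K] (i : σ) (J : Ideal (MvPolynomial σ K)) : Prop :=
  ∃ S : Set (σ →₀ ℕ), (∀ d ∈ S, d i = 0) ∧ J = Ideal.span ((fun d ↦ monomial d (1 : K)) '' S)

namespace IsSpanOfMonomialsAvoiding

variable [CommSemiring K] {i : σ} {J J' : Ideal (MvPolynomial σ K)}

theorem top : IsSpanOfMonomialsAvoiding i (⊤ : Ideal (MvPolynomial σ K)) :=
  ⟨{0}, by simp, by simp⟩

theorem mul (hJ : IsSpanOfMonomialsAvoiding i J) (hJ' : IsSpanOfMonomialsAvoiding i J') :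
    IsSpanOfMonomialsAvoiding i (J * J') := by
  obtain ⟨S, hS, rfl⟩ := hJ
  obtain ⟨T, hT, rfl⟩ := hJ'
  refine ⟨S + T, ?_, ?_⟩
  · rintro _ ⟨d, hd, e, he, rfl⟩
    simp [hS d hd, hT e he]
  · rw [Ideal.span_mul_span']
    congr 1
    rw [← Set.image2_mul, ← Set.image2_add, Set.image2_image_left, Set.image2_image_right,
      Set.image_image2]
    simp [monomial_mul]

theorem pow (hJ : IsSpanOfMonomialsAvoiding i J) (n : ℕ) :
    IsSpanOfMonomialsAvoiding i (J ^ n) := by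
  induction n with
  | zero => simpa using top
  | succ n ih => simpa only [pow_succ] using ih.mul hJ

theorem mem_of_X_mul_mem (hJ : IsSpanOfMonomialsAvoiding i J) (f : MvPolynomial σ K)
    (hf : X i * f ∈ J) : f ∈ J := by
  obtain ⟨S, hS, rfl⟩ := hJ
  rw [mem_ideal_span_monomial_image] at hf ⊢
  intro e he
  obtain ⟨d, hd, hle⟩ := hf (Finsupp.single i 1 + e) (by
    rw [mem_support_iff, coeff_X_mul]
    exact mem_support_iff.mp he)
  refine ⟨d, hd, fun j ↦ ?_⟩
  by_cases hj : j = i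
  · simp [hj, hS d hd]
  · simpa [Finsupp.single_apply, Ne.symm hj] using hle j

theorem mem_of_X_pow_mul_mem (hJ : IsSpanOfMonomialsAvoiding i J) {n : ℕ} {f : MvPolynomial σ K}
    (hf : X i ^ n * f ∈ J) : f ∈ J := by
  induction n with
  | zero => simpa using hf
  | succ n ih => exact ih (hJ.mem_of_X_mul_mem _ (by rwa [← mul_assoc, ← pow_succ']))

end IsSpanOfMonomialsAvoiding

/-- If `Q` is primary with `X i ∉ √Q`, `X i ∈ √L` and `Q ⊓ L` is a monomial ideal, then `Q` is
generated by monomials not involving `X i`. -/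
theorem isSpanOfMonomialsAvoiding_of_isPrimary [CommRing K] {i : σ}
    {Q L : Ideal (MvPolynomial σ K)} {S : Set (σ →₀ ℕ)}
    (hS : Q ⊓ L = Ideal.span ((fun d ↦ monomial d (1 : K)) '' S)) (hQ : Q.IsPrimary)
    (hiQ : X i ∉ Q.radical) (hiL : X i ∈ L.radical) : IsSpanOfMonomialsAvoiding i Q := by
  set J : Ideal (MvPolynomial σ K) :=
    Ideal.span ((fun d ↦ monomial d (1 : K)) '' (Finsupp.erase i '' S)) with hJdef
  have hJ : IsSpanOfMonomialsAvoiding i J := ⟨_, by rintro _ ⟨d, -, rfl⟩; simp, hJdef⟩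
  have hfactor (d : σ →₀ ℕ) :
      monomial d (1 : K) = monomial (d.erase i) 1 * X i ^ d i := by
    rw [X_pow_eq_monomial, monomial_mul, mul_one, Finsupp.erase_add_single]
  suffices Q = J by rwa [this]
  refine le_antisymm (fun f hf ↦ ?_) ?_
  · obtain ⟨n, hn⟩ := hiL
    refine hJ.mem_of_X_pow_mul_mem (n := n) ?_
    have hle : Q ⊓ L ≤ J := by
      rw [hS, Ideal.span_le]
      rintro _ ⟨d, hd, rfl⟩
      simp only [hfactor d]
      exact J.mul_mem_right _ (Ideal.subset_span ⟨_, ⟨d, hd, rfl⟩, rfl⟩)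
    exact hle ⟨Q.mul_mem_left _ hf, L.mul_mem_right _ hn⟩
  · rw [hJdef, Ideal.span_le]
    rintro _ ⟨_, ⟨d, hd, rfl⟩, rfl⟩
    have hdQ : monomial d (1 : K) ∈ Q :=
      (hS.ge.trans inf_le_left) (Ideal.subset_span ⟨d, hd, rfl⟩)
    rw [hfactor d] at hdQ
    refine ((Ideal.isPrimary_iff.mp hQ).2 hdQ).resolve_right fun h ↦ hiQ ?_
    rw [← Ideal.radical_idem]
    exact ⟨_, h⟩

theorem idealOfVars_isMaximal [Field K] : (idealOfVars σ K).IsMaximal := by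
  have hker : idealOfVars σ K = RingHom.ker (constantCoeff (σ := σ) (R := K)) := by
    ext f
    rw [idealOfVars, ← Set.image_univ, mem_ideal_span_X_image, RingHom.mem_ker,
      constantCoeff_eq]
    refine ⟨fun h ↦ ?_, fun h d hd ↦ ?_⟩
    · by_contra h0
      simpa using h 0 (mem_support_iff.mpr h0)
    · by_contra! hd0
      obtain rfl : d = 0 := Finsupp.ext fun j ↦ hd0 j (Set.mem_univ j)
      exact mem_support_iff.mp hd h
  rw [hker]
  exact RingHom.ker_isMaximal_of_surjective _ fun c ↦ ⟨C c, constantCoeff_C _ c⟩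

theorem X_notMem_span_pair [CommSemiring K] [Nontrivial K] {i j k : σ} (hj : i ≠ j)
    (hk : i ≠ k) : (X i : MvPolynomial σ K) ∉ Ideal.span {X j, X k} := by
  rw [← Set.image_pair, mem_ideal_span_X_image]
  simp [support_X, hj, hk]

end MvPolynomial

theorem stmt_0 {K : Type*} [Field K]
    (I Q L : Ideal (MvPolynomial (Fin 3) K))
    (hI : IsMonomialIdeal I)
    (hdec : I = Q ⊓ L)
    (hQ : Q.IsPrimary) (hL : L.IsPrimary)
    (hQrad : Q.radical = Ideal.span {X 0, X 1} ∨ Q.radical = Ideal.span {X 0, X 2} ∨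
      Q.radical = Ideal.span {X 1, X 2})
    (hLrad : L.radical = Ideal.span {X 0, X 1, X 2})
    (hirr1 : ¬ Q ≤ L) (hirr2 : ¬ L ≤ Q)
    (t : ℕ) (ht : 2 ≤ t)
    (hm : Ideal.span {(X 0 : MvPolynomial (Fin 3) K), X 1, X 2} ∉
      associatedPrimes (MvPolynomial (Fin 3) K) (MvPolynomial (Fin 3) K ⧸ I ^ t)) :
    ∀ α ≥ t, Ideal.span {(X 0 : MvPolynomial (Fin 3) K), X 1, X 2} ∉
      associatedPrimes (MvPolynomial (Fin 3) K) (MvPolynomial (Fin 3) K ⧸ I ^ α) := by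
  have hvars : Ideal.span {(X 0 : MvPolynomial (Fin 3) K), X 1, X 2} = idealOfVars (Fin 3) K := by
    congr 1
    ext f
    simp [Fin.exists_fin_succ, eq_comm]
  have hmax : (Ideal.span {(X 0 : MvPolynomial (Fin 3) K), X 1, X 2}).IsMaximal :=
    hvars ▸ idealOfVars_isMaximal
  have hX (i : Fin 3) : X i ∈ Ideal.span {(X 0 : MvPolynomial (Fin 3) K), X 1, X 2} :=
    hvars ▸ Ideal.subset_span ⟨i, rfl⟩
  obtain ⟨i, hi⟩ : ∃ i : Fin 3, X i ∉ Q.radical := by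
    rcases hQrad with h | h | h <;> rw [h]
    exacts [⟨2, X_notMem_span_pair (by decide) (by decide)⟩,
      ⟨1, X_notMem_span_pair (by decide) (by decide)⟩,
      ⟨0, X_notMem_span_pair (by decide) (by decide)⟩]
  obtain ⟨S, hS⟩ := hI
  have hQmon : IsSpanOfMonomialsAvoiding i Q :=
    isSpanOfMonomialsAvoiding_of_isPrimary (hdec.symm.trans hS) hQ hi (hLrad ▸ hX i)
  have hIQ : I ≤ Q := hdec.le.trans inf_le_left
  have hpow : I ^ t = Q ^ t := by
    refine le_antisymm (Ideal.pow_right_mono hIQ t) ?_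
    by_contra hne
    obtain ⟨n, hn⟩ := L.exists_radical_pow_le_of_fg (IsNoetherian.noetherian _)
    rw [hLrad] at hn
    refine hm (Ideal.mem_associatedPrimes_of_pow_mul_le hmax (n := n * t) ?_ hne)
    rw [pow_mul, ← mul_pow]
    refine Ideal.pow_right_mono ?_ t
    rw [hdec]
    exact le_inf Ideal.mul_le_right (Ideal.mul_le_left.trans hn)
  intro α hα hmem
  rw [Ideal.pow_eq_pow_of_le_of_pow_eq hIQ (by lia) hpow hα] at hmem
  exact Ideal.notMem_of_mem_associatedPrimes (hQmon.pow α).mem_of_X_mul_mem hmem (hX i)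
end

section
/- Let K be a field, R = K[x,y,z], and let m, r ≥ 1 be integers. Let I = (x^{m+3}, y^{m+3}, x^{m+2}y, x y^{m+2}, x^{m+1} y^{2} z^{r}) ⊂ R. Then for every integer s with 1 ≤ s ≤ m, Ass_R(R/I^s) = {(x,y), (x,y,z)}. -/
open MvPolynomial

section MonomialIdeal

variable {σ K : Type*} [Field K]

/-- A polynomial with nonzero constant coefficient is a nonzerodivisor modulo a monomial ideal. -/
lemma mem_span_monomial_of_mul_mem {T : Set (σ →₀ ℕ)} {h u : MvPolynomial σ K}
    (hh : constantCoeff h ≠ 0)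
    (hu : h * u ∈ Ideal.span ((fun t => monomial t (1 : K)) '' T)) :
    u ∈ Ideal.span ((fun t => monomial t (1 : K)) '' T) := by
  classical
  rw [mem_ideal_span_monomial_image] at hu ⊢
  intro α
  induction α using WellFoundedLT.induction with
  | ind α ih =>
    intro hα
    by_contra hT
    refine hT (hu α ?_)
    rw [mem_support_iff, coeff_mul, Finset.sum_eq_single (0, α)]
    · exact mul_ne_zero hh (mem_support_iff.mp hα)
    · rintro ⟨β, γ⟩ hβγ hne
      rw [Finset.HasAntidiagonal.mem_antidiagonal] at hβγ
      dsimp only at hβγ ⊢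
      have hle : γ ≤ α := hβγ ▸ le_add_self
      have hlt : γ < α := by
        refine lt_of_le_of_ne hle fun hγ => hne ?_
        subst hγ
        simpa using hβγ
      have hγ : coeff γ u = 0 := by
        by_contra hγ
        obtain ⟨t, ht, htγ⟩ := ih γ hlt (mem_support_iff.mpr hγ)
        exact hT ⟨t, ht, htγ.trans hle⟩
      rw [hγ, mul_zero]
    · simp

/-- Associated primes of a monomial ideal lie in the ideal of polynomials without constant term. -/
lemma constantCoeff_eq_zero_of_mem_associatedPrime [Finite σ] {T : Set (σ →₀ ℕ)}
    {P : Ideal (MvPolynomial σ K)}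
    (hP : IsAssociatedPrime P
      (MvPolynomial σ K ⧸ Ideal.span ((fun t => monomial t (1 : K)) '' T)))
    {h : MvPolynomial σ K} (hh : h ∈ P) : constantCoeff h = 0 := by
  obtain ⟨hprime, v, rfl⟩ := isAssociatedPrime_iff.mp hP
  obtain ⟨u, rfl⟩ := Ideal.Quotient.mk_surjective v
  by_contra hc
  refine hprime.ne_top ((Ideal.eq_top_iff_one _).mpr ?_)
  rw [Submodule.mem_colon_singleton, Submodule.mem_bot] at hh ⊢
  rw [one_smul, Ideal.Quotient.eq_zero_iff_mem]
  refine mem_span_monomial_of_mul_mem hc ?_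
  rwa [← Ideal.Quotient.eq_zero_iff_mem, map_mul]

open scoped Pointwise in
/-- A power of a monomial ideal is a monomial ideal, and its generators inherit any
property of the exponents that is additive along the powers. -/
lemma exists_span_monomial_pow (T : Set (σ →₀ ℕ)) (p : ℕ → (σ →₀ ℕ) → Prop) (h0 : p 0 0)
    (hadd : ∀ n, ∀ a, p n a → ∀ t ∈ T, p (n + 1) (a + t)) (n : ℕ) :
    ∃ S : Set (σ →₀ ℕ), Ideal.span ((fun t => monomial t (1 : K)) '' T) ^ n =
      Ideal.span ((fun t => monomial t (1 : K)) '' S) ∧ ∀ a ∈ S, p n a := by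
  induction n with
  | zero => exact ⟨{0}, by simp, by simpa using h0⟩
  | succ n ih =>
    obtain ⟨S, hS, hp⟩ := ih
    refine ⟨S + T, ?_, ?_⟩
    · rw [pow_succ, hS, Ideal.span_mul_span']
      congr 1
      ext f
      simp [Set.mem_mul, Set.mem_add]
    · rintro _ ⟨a, ha, t, ht, rfl⟩
      exact hadd n a (hp a ha) t ht

end MonomialIdeal

section ThreeVariables

variable {K : Type*} [Field K]

lemma sub_aeval_aeval_mem_span_X_zero_X_one (g : MvPolynomial (Fin 3) K) :
    g - Polynomial.aeval (X 2 : MvPolynomial (Fin 3) K)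
      (aeval ![0, 0, (Polynomial.X : Polynomial K)] g) ∈
      Ideal.span {(X 0 : MvPolynomial (Fin 3) K), X 1} := by
  rw [← Ideal.Quotient.eq]
  set J := Ideal.span {(X 0 : MvPolynomial (Fin 3) K), X 1}
  suffices Ideal.Quotient.mkₐ K J =
      (Ideal.Quotient.mkₐ K J).comp ((Polynomial.aeval (X 2 : MvPolynomial (Fin 3) K)).comp
        (aeval ![0, 0, (Polynomial.X : Polynomial K)])) from DFunLike.congr_fun this g
  have h0 : Ideal.Quotient.mk J (X 0) = 0 :=
    Ideal.Quotient.eq_zero_iff_mem.mpr (Ideal.subset_span (by simp))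
  have h1 : Ideal.Quotient.mk J (X 1) = 0 :=
    Ideal.Quotient.eq_zero_iff_mem.mpr (Ideal.subset_span (by simp))
  ext i
  fin_cases i <;> simp [h0, h1]

lemma ker_aeval_eq_span_X_zero_X_one :
    RingHom.ker (aeval ![0, 0, (Polynomial.X : Polynomial K)]) =
      Ideal.span {(X 0 : MvPolynomial (Fin 3) K), X 1} := by
  refine le_antisymm (fun g hg => ?_) ?_
  · have := sub_aeval_aeval_mem_span_X_zero_X_one g
    rwa [(RingHom.mem_ker).mp hg, map_zero, sub_zero] at this
  · rw [Ideal.span_le]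
    rintro _ (rfl | rfl) <;> simp

lemma isPrime_span_X_zero_X_one :
    (Ideal.span {(X 0 : MvPolynomial (Fin 3) K), X 1}).IsPrime :=
  ker_aeval_eq_span_X_zero_X_one (K := K) ▸ RingHom.ker_isPrime _

lemma mem_span_X_of_constantCoeff_eq_zero {f : MvPolynomial (Fin 3) K}
    (hf : constantCoeff f = 0) :
    f ∈ Ideal.span {(X 0 : MvPolynomial (Fin 3) K), X 1, X 2} := by
  have := (mem_ideal_span_X_image (x := f) (s := ({0, 1, 2} : Set (Fin 3)))).mpr ?_
  · simpa [Set.image_insert_eq] using this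
  · intro a ha
    by_contra! hzero
    have : a = 0 := by
      ext i
      fin_cases i
      exacts [hzero 0 (by simp), hzero 1 (by simp), hzero 2 (by simp)]
    subst this
    exact mem_support_iff.mp ha hf

/-- A prime containing `x` and `y` and contained in `(x, y, z)` is one of `(x, y)`, `(x, y, z)`. -/
lemma eq_span_of_isPrime {P : Ideal (MvPolynomial (Fin 3) K)} (hP : P.IsPrime)
    (h0 : X 0 ∈ P) (h1 : X 1 ∈ P) (hc : ∀ h ∈ P, constantCoeff h = 0) :
    X 2 ∉ P ∧ P = Ideal.span {X 0, X 1} ∨ X 2 ∈ P ∧ P = Ideal.span {X 0, X 1, X 2} := by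
  have hle : Ideal.span {X 0, X 1} ≤ P := by
    rw [Ideal.span_le]
    rintro _ (rfl | rfl) <;> assumption
  by_cases h2 : X 2 ∈ P
  · refine Or.inr ⟨h2, le_antisymm
      (fun f hf => mem_span_X_of_constantCoeff_eq_zero (hc f hf)) ?_⟩
    rw [Ideal.span_le]
    rintro _ (rfl | rfl | rfl) <;> assumption
  · refine Or.inl ⟨h2, le_antisymm (fun g hg => ?_) hle⟩
    rw [← ker_aeval_eq_span_X_zero_X_one, RingHom.mem_ker]
    by_contra hne
    obtain ⟨q, hq, hndvd⟩ :=
      Polynomial.exists_eq_pow_rootMultiplicity_mul_and_not_dvd _ hne 0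
    rw [map_zero, sub_zero] at hq hndvd
    have hmem := hle (sub_aeval_aeval_mem_span_X_zero_X_one g)
    rw [Submodule.sub_mem_iff_right _ hg, hq, map_mul, map_pow, Polynomial.aeval_X] at hmem
    have hqP := (hP.mem_or_mem hmem).resolve_left fun h => h2 (hP.mem_of_pow_mem _ h)
    refine hndvd (Polynomial.X_dvd_iff.mpr ?_)
    have hcoeff := hc _ hqP
    rw [Polynomial.aeval_def, Polynomial.hom_eval₂, constantCoeff_X,
      Polynomial.eval₂_at_zero] at hcoeff
    simpa using hcoeff

lemma X_pow_mul_eq_monomial (a b c : ℕ) :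
    (X 0 ^ a * X 1 ^ b * X 2 ^ c : MvPolynomial (Fin 3) K) =
      monomial (Finsupp.equivFunOnFinite.symm ![a, b, c]) 1 := by
  rw [monomial_eq, Finsupp.prod_fintype _ _ (by simp)]
  simp [Fin.prod_univ_three]

end ThreeVariables

theorem stmt_1 {K : Type*} [Field K] (m r : ℕ) (hm : 1 ≤ m) (hr : 1 ≤ r)
    (I : Ideal (MvPolynomial (Fin 3) K))
    (hI : I = Ideal.span {X 0 ^ (m + 3), X 1 ^ (m + 3), X 0 ^ (m + 2) * X 1,
      X 0 * X 1 ^ (m + 2), X 0 ^ (m + 1) * X 1 ^ 2 * X 2 ^ r}) :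
    ∀ s : ℕ, 1 ≤ s → s ≤ m →
      associatedPrimes (MvPolynomial (Fin 3) K) (MvPolynomial (Fin 3) K ⧸ I ^ s) =
        {Ideal.span {X 0, X 1}, Ideal.span {X 0, X 1, X 2}} := by
  intro s hs hsm
  set e : (Fin 3 → ℕ) → (Fin 3 →₀ ℕ) :=
    fun v => Finsupp.equivFunOnFinite.symm v with he
  set T : Set (Fin 3 →₀ ℕ) := {e ![m + 3, 0, 0], e ![0, m + 3, 0], e ![m + 2, 1, 0],
    e ![1, m + 2, 0], e ![m + 1, 2, r]} with hT
  have hIT : I = Ideal.span ((fun t => monomial t (1 : K)) '' T) := by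
    simp [hI, hT, he, Set.image_insert_eq, ← X_pow_mul_eq_monomial]
  obtain ⟨S, hS, hSp⟩ := exists_span_monomial_pow (K := K) T
    (fun n a => 1 ≤ a 2 ∨ a 0 + a 1 = (m + 3) * n ∧ (a 1 ≤ n ∨ m + 2 ≤ a 1)) (by simp)
    (by
      rintro n a ha t (rfl | rfl | rfl | rfl | rfl) <;>
        simp [he, mul_add] <;> omega) s
  rw [← hIT] at hS
  have hx : X 0 ^ (m + 3) ∈ I := hI ▸ Ideal.subset_span (by simp)
  have hy : X 1 ^ (m + 3) ∈ I := hI ▸ Ideal.subset_span (by simp)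
  have hxy : X 0 ^ (m + 2) * X 1 ∈ I := hI ▸ Ideal.subset_span (by simp)
  have hz : X 0 ^ (m + 1) * X 1 ^ 2 * X 2 ^ r ∈ I := hI ▸ Ideal.subset_span (by simp)
  have hIle : I ≤ Ideal.span {X 0, X 1} := by
    rw [← ker_aeval_eq_span_X_zero_X_one, hI, Ideal.span_le]
    rintro _ (rfl | rfl | rfl | rfl | rfl) <;> simp
  have hclass : ∀ P : Ideal (MvPolynomial (Fin 3) K),
      IsAssociatedPrime P (MvPolynomial (Fin 3) K ⧸ I ^ s) →
      X 2 ∉ P ∧ P = Ideal.span {X 0, X 1} ∨ X 2 ∈ P ∧ P = Ideal.span {X 0, X 1, X 2} := by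
    intro P hP
    have hIP : I ≤ P := by
      have := hP.annihilator_le
      rw [Submodule.annihilator_top, Ideal.annihilator_quotient] at this
      exact hP.isPrime.le_of_pow_le this
    refine eq_span_of_isPrime hP.isPrime (hP.isPrime.mem_of_pow_mem _ (hIP hx))
      (hP.isPrime.mem_of_pow_mem _ (hIP hy)) fun h hh => ?_
    rw [hS] at hP
    exact constantCoeff_eq_zero_of_mem_associatedPrime hP hh
  ext P
  rw [AssociatedPrimes.mem_iff, Set.mem_insert_iff, Set.mem_singleton_iff]
  refine ⟨fun hP => (hclass P hP).imp And.right And.right, ?_⟩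
  rintro (rfl | rfl)
  · refine Module.associatedPrimes.minimalPrimes_annihilator_subset_associatedPrimes _ _ ?_
    rw [Ideal.annihilator_quotient]
    refine ⟨⟨isPrime_span_X_zero_X_one, (Ideal.pow_le_self (by omega)).trans hIle⟩, ?_⟩
    rintro Q ⟨hQ, hle⟩ -
    have hIQ : I ≤ Q := hQ.le_of_pow_le hle
    rw [Ideal.span_le]
    rintro _ (rfl | rfl)
    exacts [hQ.mem_of_pow_mem _ (hIQ hx), hQ.mem_of_pow_mem _ (hIQ hy)]
  · obtain ⟨k, rfl⟩ : ∃ k, s = k + 1 := ⟨s - 1, by omega⟩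
    set u : MvPolynomial (Fin 3) K := X 0 ^ ((m + 2) * k + (m + 1)) * X 1 ^ (k + 2) with hu
    have hu_mul : X 2 ^ r * u ∈ I ^ (k + 1) := by
      have := Ideal.mul_mem_mul (Ideal.pow_mem_pow hxy k) hz
      rw [← pow_succ] at this
      convert this using 1
      rw [hu]
      ring
    have hu_not : u ∉ I ^ (k + 1) := by
      intro hmem
      have hmon := X_pow_mul_eq_monomial (K := K) ((m + 2) * k + (m + 1)) (k + 2) 0
      rw [pow_zero, mul_one, ← hu] at hmon
      rw [hS, mem_ideal_span_monomial_image, hmon] at hmem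
      obtain ⟨a, ha, hle⟩ := 
        hmem (Finsupp.equivFunOnFinite.symm ![(m + 2) * k + (m + 1), k + 2, 0]) (by simp)
      have h0 := hle 0
      have h1 := hle 1
      have h2 := hle 2
      have := hSp a ha
      simp only [Finsupp.equivFunOnFinite_symm_apply_apply, Matrix.cons_val] at h0 h1 h2
      have hexp : (m + 3) * (k + 1) = (m + 2) * k + k + m + 3 := by ring
      omega
    obtain ⟨P, hP, hle⟩ := exists_le_isAssociatedPrime_of_isNoetherianRing
      (MvPolynomial (Fin 3) K) (Ideal.Quotient.mk (I ^ (k + 1)) u)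
      (by rwa [Ne, Ideal.Quotient.eq_zero_iff_mem])
    have hzP : X 2 ∈ P := by
      refine hP.isPrime.mem_of_pow_mem r (hle ?_)
      rw [Submodule.mem_colon_singleton, Submodule.mem_bot]
      change Ideal.Quotient.mk _ (X 2 ^ r * u) = 0
      rwa [Ideal.Quotient.eq_zero_iff_mem]
    obtain ⟨hn, -⟩ | ⟨-, rfl⟩ := hclass P hP
    exacts [absurd hzP hn, hP]
end

section
/- Let K be a field, R = K[x,y,z], and let m, r ≥ 1 be integers. Let I = (x^{m+3}, y^{m+3}, x^{m+2}y, x y^{m+2}, x^{m+1} y^{2} z^{r}) ⊂ R. Then for every integer s ≥ m+1, Ass_R(R/I^s) = {(x,y)}. -/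
open MvPolynomial

namespace MvPolynomial

variable {σ R : Type*} [CommRing R]

/-- The weight of an exponent vector for the indicator of `S` counts the variables in `S`, and
a monomial of weight `n` lies in the `n`-th power of the ideal generated by these variables. -/
theorem monomial_mem_span_X_image_pow (S : Set σ) (d : σ →₀ ℕ) (a : R) :
    monomial d a ∈
      (Ideal.span (X '' S) : Ideal (MvPolynomial σ R)) ^ Finsupp.weight (S.indicator 1) d := by
  suffices h : monomial d (1 : R) ∈
      (Ideal.span (X '' S) : Ideal (MvPolynomial σ R)) ^ Finsupp.weight (S.indicator 1) d by
    simpa [C_mul_monomial] using Ideal.mul_mem_left _ (C a) h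
  induction d using Finsupp.induction_linear with
  | zero => simp
  | add f g hf hg =>
    rw [map_add, pow_add, ← mul_one (1 : R), ← monomial_mul]
    exact Ideal.mul_mem_mul hf hg
  | single i k =>
    rw [← X_pow_eq_monomial, Finsupp.weight_single]
    by_cases hi : i ∈ S
    · simpa [hi] using Ideal.pow_mem_pow (Ideal.subset_span (Set.mem_image_of_mem X hi)) k
    · simp [hi]

theorem mem_span_X_image_pow_iff (S : Set σ) (n : ℕ) (f : MvPolynomial σ R) :
    f ∈ Ideal.span (X '' S) ^ n ↔
      (n : ℕ∞) ≤ (f : MvPowerSeries σ R).weightedOrder (S.indicator 1) := by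
  constructor
  · intro hf
    induction n generalizing f with
    | zero => simp
    | succ n ih =>
      rw [pow_succ] at hf
      induction hf using Submodule.mul_induction_on' with
      | mem_mul_mem p hp q hq =>
        rw [coe_mul, Nat.cast_succ]
        refine (add_le_add (ih p hp) ?_).trans (MvPowerSeries.le_weightedOrder_mul _)
        refine MvPowerSeries.nat_le_weightedOrder (n := 1) _ fun d hd => ?_
        by_contra hne
        rw [coeff_coe] at hne
        obtain ⟨i, hi, hdi⟩ := mem_ideal_span_X_image.1 hq d (mem_support_iff.2 hne)
        have := Finsupp.le_weight (S.indicator (1 : σ → ℕ)) (s := i) (by simp [hi]) d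
        omega
      | add p _ q _ hp hq =>
        rw [coe_add]
        exact (le_min hp hq).trans (MvPowerSeries.min_weightedOrder_le_add _)
  · intro h
    rw [f.as_sum]
    refine Ideal.sum_mem _ fun d hd => ?_
    refine Ideal.pow_le_pow_right ?_ (monomial_mem_span_X_image_pow S d _)
    rw [← Nat.cast_le (α := ℕ∞)]
    refine h.trans (MvPowerSeries.weightedOrder_le _ ?_)
    rwa [coeff_coe, ← mem_support_iff]

/-- Powers of an ideal generated by variables are primary. -/
theorem isPrimary_span_X_image_pow [IsDomain R] (S : Set σ) {n : ℕ} (hn : n ≠ 0) :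
    (Ideal.span (X '' S) ^ n : Ideal (MvPolynomial σ R)).IsPrimary := by
  rw [Ideal.isPrimary_iff]
  constructor
  · rw [Ideal.ne_top_iff_one, mem_span_X_image_pow_iff, coe_one, MvPowerSeries.weightedOrder_one]
    simpa using hn
  · intro f g hfg
    by_contra! h
    obtain ⟨hf, hg⟩ := h
    have hg' : g ∉ Ideal.span (X '' S) ^ 1 := fun hg' =>
      hg ⟨n, Ideal.pow_mem_pow (by simpa using hg') n⟩
    rw [mem_span_X_image_pow_iff, not_le] at hf hg'
    rw [mem_span_X_image_pow_iff, coe_mul, MvPowerSeries.weightedOrder_mul] at hfg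
    rw [Nat.cast_one, Order.lt_one_iff] at hg'
    rw [hg', add_zero] at hfg
    exact hf.not_ge hfg

theorem isPrime_span_X_image [IsDomain R] (S : Set σ) :
    (Ideal.span (X '' S) : Ideal (MvPolynomial σ R)).IsPrime := by
  rw [Ideal.isPrime_iff]
  constructor
  · simpa using (isPrimary_span_X_image_pow (R := R) S one_ne_zero).1
  · intro f g hfg
    rw [← pow_one (Ideal.span _), mem_span_X_image_pow_iff] at hfg
    rw [← pow_one (Ideal.span _), mem_span_X_image_pow_iff, mem_span_X_image_pow_iff]
    rw [coe_mul, MvPowerSeries.weightedOrder_mul] at hfg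
    by_contra! h
    simp only [Nat.cast_one, Order.lt_one_iff] at h hfg
    simp [h.1, h.2] at hfg

end MvPolynomial

/-- Every degree up to `(m + 3) * s` is a sum of `s` elements of `{0, 1, m + 2, m + 3}` as soon as
`m + 1 ≤ s`. -/
theorem exists_sum_decomposition {m s b : ℕ} (hs : m + 1 ≤ s) (hb : b ≤ (m + 3) * s) :
    ∃ p q t v : ℕ, p + q + t + v = s ∧ b = (m + 3) * p + (m + 2) * q + t := by
  obtain ⟨j, e, hj, he, hbe⟩ : ∃ j e : ℕ, j ≤ s ∧ e ≤ s ∧ b = (m + 2) * j + e := by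
    by_cases h : b / (m + 2) ≤ s
    · refine ⟨b / (m + 2), b % (m + 2), h, ?_, (Nat.div_add_mod _ _).symm⟩
      have := Nat.mod_lt b (show 0 < m + 2 by omega)
      omega
    · have h' : s * (m + 2) ≤ b := (Nat.le_div_iff_mul_le (by omega)).1 (not_le.1 h).le
      exact ⟨s, b - (m + 2) * s, le_rfl, by grind, by grind⟩
  by_cases hej : e ≤ j
  · obtain ⟨q, rfl⟩ := Nat.exists_eq_add_of_le hej
    exact ⟨e, q, 0, s - (e + q), by omega, by rw [hbe]; ring⟩
  · obtain ⟨t, rfl⟩ := Nat.exists_eq_add_of_le (not_le.1 hej).le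
    exact ⟨j, 0, t, s - (j + t), by omega, by rw [hbe]; ring⟩

/-- An ideal containing `x ^ (m + 3)`, `x ^ (m + 2) * y`, `x * y ^ (m + 2)` and `y ^ (m + 3)` has
`s`-th power containing `(x, y) ^ ((m + 3) * s)` for `m + 1 ≤ s`. -/
theorem Ideal.span_pair_pow_le_pow {A : Type*} [CommRing A] {x y : A} {I : Ideal A} {m s : ℕ}
    (hs : m + 1 ≤ s) (hx : x ^ (m + 3) ∈ I) (hy : y ^ (m + 3) ∈ I)
    (hxy : x ^ (m + 2) * y ∈ I) (hyx : x * y ^ (m + 2) ∈ I) :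
    Ideal.span {x, y} ^ ((m + 3) * s) ≤ I ^ s := by
  rw [Ideal.span_insert, ← Submodule.add_eq_sup, add_comm, add_pow]
  refine Finset.sum_induction _ (· ≤ I ^ s) (fun _ _ => sup_le) bot_le fun b hb => ?_
  refine Ideal.mul_le_left.trans ?_
  rw [Ideal.span_singleton_pow, Ideal.span_singleton_pow, Ideal.span_singleton_mul_span_singleton,
    Ideal.span_singleton_le_iff_mem]
  obtain ⟨p, q, t, v, rfl, hbp⟩ :=
    exists_sum_decomposition hs (Nat.lt_succ_iff.1 (Finset.mem_range.1 hb))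
  have ha : (m + 3) * (p + q + t + v) - b = q + (m + 2) * t + (m + 3) * v := by
    rw [hbp, Nat.sub_eq_iff_eq_add (by nlinarith)]
    ring
  have key : y ^ b * x ^ ((m + 3) * (p + q + t + v) - b) =
      (y ^ (m + 3)) ^ p * (x * y ^ (m + 2)) ^ q * (x ^ (m + 2) * y) ^ t * (x ^ (m + 3)) ^ v := by
    rw [ha, hbp]
    ring
  rw [key, pow_add, pow_add, pow_add]
  exact Ideal.mul_mem_mul (Ideal.mul_mem_mul (Ideal.mul_mem_mul (Ideal.pow_mem_pow hy p)
    (Ideal.pow_mem_pow hyx q)) (Ideal.pow_mem_pow hxy t)) (Ideal.pow_mem_pow hx v)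

theorem stmt_2 {K : Type*} [Field K] (m r : ℕ) (hm : 1 ≤ m) (hr : 1 ≤ r)
    (I : Ideal (MvPolynomial (Fin 3) K))
    (hI : I = Ideal.span {X 0 ^ (m + 3), X 1 ^ (m + 3), X 0 ^ (m + 2) * X 1,
      X 0 * X 1 ^ (m + 2), X 0 ^ (m + 1) * X 1 ^ 2 * X 2 ^ r}) :
    ∀ s : ℕ, m + 1 ≤ s →
      associatedPrimes (MvPolynomial (Fin 3) K) (MvPolynomial (Fin 3) K ⧸ I ^ s) =
        {Ideal.span {X 0, X 1}} := by
  intro s hs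
  have hx : (X 0 : MvPolynomial (Fin 3) K) ∈ Ideal.span {X 0, X 1} :=
    Ideal.subset_span (by simp)
  have hy : (X 1 : MvPolynomial (Fin 3) K) ∈ Ideal.span {X 0, X 1} :=
    Ideal.subset_span (by simp)
  have hle : I ≤ Ideal.span {X 0, X 1} ^ (m + 3) := by
    rw [hI, Ideal.span_le]
    rintro f (rfl | rfl | rfl | rfl | rfl)
    · exact Ideal.pow_mem_pow hx _
    · exact Ideal.pow_mem_pow hy _
    · exact Ideal.mul_mem_mul (Ideal.pow_mem_pow hx _) hy
    · rw [mul_comm]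
      exact Ideal.mul_mem_mul (Ideal.pow_mem_pow hy _) hx
    · refine Ideal.mul_mem_right _ _ ?_
      rw [show m + 3 = (m + 1) + 2 from rfl, pow_add]
      exact Ideal.mul_mem_mul (Ideal.pow_mem_pow hx _) (Ideal.pow_mem_pow hy _)
  have hpow : I ^ s = Ideal.span {X 0, X 1} ^ ((m + 3) * s) := by
    apply le_antisymm
    · rw [pow_mul]
      exact Ideal.pow_right_mono hle s
    · subst hI
      apply Ideal.span_pair_pow_le_pow hs <;> exact Ideal.subset_span (by simp)
  have hne : (m + 3) * s ≠ 0 := mul_ne_zero (by omega) (by omega)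
  rw [hpow, ← Set.image_pair]
  have := isPrime_span_X_image (R := K) ({0, 1} : Set (Fin 3))
  rw [associatedPrimes.eq_singleton_of_isPrimary (isPrimary_span_X_image_pow _ hne),
    Ideal.radical_pow _ hne, this.radical]
end

section
/- Let K be a field, R = K[x,y,z], and let m, r ≥ 1 be integers. Then the ideal I = (x^{m+3}, y^{m+3}, x^{m+2}y, x y^{m+2}, x^{m+1} y^{2} z^{r}) satisfies the equality of ideals I = (x, y^{m+3}) ∩ (x^{m+3}, y) ∩ (x^{m+1}, y^{m+2}) ∩ (x^{m+2}, y^{2}) ∩ (x^{m+2}, y^{m+2}, z^{r}). -/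
open MvPolynomial

/-- Membership in a monomial ideal of `K[x, y, z]`, where the generators are given by their
exponent vectors. -/
theorem mem_span_image_X_pow_iff {K : Type*} [CommSemiring K] (s : Set (ℕ × ℕ × ℕ))
    (p : MvPolynomial (Fin 3) K) :
    p ∈ Ideal.span ((fun t : ℕ × ℕ × ℕ =>
        (X 0 ^ t.1 * X 1 ^ t.2.1 * X 2 ^ t.2.2 : MvPolynomial (Fin 3) K)) '' s) ↔
      ∀ d ∈ p.support, ∃ t ∈ s, t.1 ≤ d 0 ∧ t.2.1 ≤ d 1 ∧ t.2.2 ≤ d 2 := by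
  have h : (fun t : ℕ × ℕ × ℕ =>
      (X 0 ^ t.1 * X 1 ^ t.2.1 * X 2 ^ t.2.2 : MvPolynomial (Fin 3) K)) =
      (fun d => monomial d 1) ∘ fun t : ℕ × ℕ × ℕ =>
        Finsupp.single 0 t.1 + Finsupp.single 1 t.2.1 + Finsupp.single 2 t.2.2 := by
    funext t
    simp [X_pow_eq_monomial, monomial_mul]
  rw [h, Set.image_comp, mem_ideal_span_monomial_image]
  simp [Finsupp.le_def, Fin.forall_fin_succ]

theorem stmt_3 {K : Type*} [Field K] (m r : ℕ) (hm : 1 ≤ m) (hr : 1 ≤ r) :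
    (Ideal.span {X 0 ^ (m + 3), X 1 ^ (m + 3), X 0 ^ (m + 2) * X 1,
        X 0 * X 1 ^ (m + 2), X 0 ^ (m + 1) * X 1 ^ 2 * X 2 ^ r} :
      Ideal (MvPolynomial (Fin 3) K)) =
      Ideal.span {X 0, X 1 ^ (m + 3)} ⊓ Ideal.span {X 0 ^ (m + 3), X 1} ⊓
        Ideal.span {X 0 ^ (m + 1), X 1 ^ (m + 2)} ⊓ Ideal.span {X 0 ^ (m + 2), X 1 ^ 2} ⊓
        Ideal.span {X 0 ^ (m + 2), X 1 ^ (m + 2), X 2 ^ r} := by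
  ext p
  have hI := mem_span_image_X_pow_iff
    {(m + 3, 0, 0), (0, m + 3, 0), (m + 2, 1, 0), (1, m + 2, 0), (m + 1, 2, r)} p
  have h₁ := mem_span_image_X_pow_iff {(1, 0, 0), (0, m + 3, 0)} p
  have h₂ := mem_span_image_X_pow_iff {(m + 3, 0, 0), (0, 1, 0)} p
  have h₃ := mem_span_image_X_pow_iff {(m + 1, 0, 0), (0, m + 2, 0)} p
  have h₄ := mem_span_image_X_pow_iff {(m + 2, 0, 0), (0, 2, 0)} p
  have h₅ := mem_span_image_X_pow_iff {(m + 2, 0, 0), (0, m + 2, 0), (0, 0, r)} p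
  simp only [Set.image_insert_eq, Set.image_singleton, pow_zero, pow_one, one_mul, mul_one,
    Set.mem_insert_iff, Set.mem_singleton_iff, exists_eq_or_imp, exists_eq_left]
    at hI h₁ h₂ h₃ h₄ h₅
  simp only [Ideal.mem_inf, hI, h₁, h₂, h₃, h₄, h₅, ← forall_and]
  refine forall₂_congr fun d _ => ?_
  omega
end

section
/- Let K be a field, R = K[x_1,…,x_n], and let I and J be monomial ideals of R. Given positive integers w_1,…,w_n, let h : R → R be the K-algebra homomorphism with h(x_i) = x_i^{w_i}, and for an ideal A let A_W denote the ideal generated by h(A). Then (I :_R J)_W = (I_W :_R J_W). -/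
open MvPolynomial

lemma Ideal.map_colon_le {A B F : Type*} [CommRing A] [CommRing B] [FunLike F A B]
    [RingHomClass F A B] (f : F) (I J : Ideal A) :
    Ideal.map f (I.colon J) ≤ (Ideal.map f I).colon (Ideal.map f J) := by
  rw [Ideal.map_le_iff_le_comap]
  intro r hr
  rw [Submodule.mem_colon] at hr
  rw [Ideal.mem_comap, Submodule.mem_colon]
  intro p hp
  induction hp using Submodule.span_induction with
  | mem x hx =>
    obtain ⟨j, hj, rfl⟩ := hx
    rw [smul_eq_mul, ← map_mul]
    exact Ideal.mem_map_of_mem f (hr j hj)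
  | zero => simp
  | add x y _ _ hx hy => rw [smul_add]; exact add_mem hx hy
  | smul a x _ hx => rw [smul_comm]; exact Submodule.smul_mem _ a hx

namespace MvPolynomial

variable {σ R : Type*} [CommRing R]

/-- Membership in the colon ideal of two ideals generated by monomials, in terms of exponents. -/
lemma mem_colon_span_monomial_image {S T : Set (σ →₀ ℕ)} {r : MvPolynomial σ R} :
    r ∈ (Ideal.span ((fun d => monomial d (1 : R)) '' S)).colon
        (Ideal.span ((fun d => monomial d (1 : R)) '' T) : Ideal (MvPolynomial σ R)) ↔
      ∀ d ∈ r.support, ∀ t ∈ T, ∃ s ∈ S, s ≤ d + t := by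
  rw [Ideal.span, Submodule.colon_span, Submodule.mem_colon, Set.forall_mem_image]
  simp only [smul_eq_mul]
  constructor
  · intro h d hd t ht
    refine mem_ideal_span_monomial_image.1 (h ht) (d + t) ?_
    rw [mem_support_iff, coeff_mul_monomial, mul_one]
    exact mem_support_iff.1 hd
  · intro h t ht
    refine mem_ideal_span_monomial_image.2 fun e he => ?_
    classical
    rw [mem_support_iff, coeff_mul_monomial', mul_one] at he
    obtain ⟨hte, hne⟩ := ite_ne_right_iff.1 he
    obtain ⟨s, hs, hle⟩ := h _ (mem_support_iff.2 hne) t ht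
    exact ⟨s, hs, by rwa [tsub_add_cancel_of_le hte] at hle⟩

variable [Finite σ]

/-- The exponent vector of the image of a monomial under `X i ↦ X i ^ w i`. -/
noncomputable def weightExponent (w : σ → ℕ) (d : σ →₀ ℕ) : σ →₀ ℕ :=
  Finsupp.equivFunOnFinite.symm fun i => w i * d i

@[simp]
lemma weightExponent_apply (w : σ → ℕ) (d : σ →₀ ℕ) (i : σ) :
    weightExponent w d i = w i * d i := rfl

lemma aeval_X_pow_monomial (w : σ → ℕ) (d : σ →₀ ℕ) :
    aeval (fun i => (X i : MvPolynomial σ R) ^ w i) (monomial d (1 : R)) =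
      monomial (weightExponent w d) 1 := by
  have := Fintype.ofFinite σ
  rw [aeval_monomial, map_one, one_mul, monomial_eq, C_1, one_mul,
    Finsupp.prod_fintype _ _ (by simp), Finsupp.prod_fintype _ _ (by simp)]
  simp [pow_mul]

lemma map_aeval_X_pow_span_monomial_image (w : σ → ℕ) (S : Set (σ →₀ ℕ)) :
    Ideal.map (aeval fun i => (X i : MvPolynomial σ R) ^ w i)
        (Ideal.span ((fun d => monomial d (1 : R)) '' S)) =
      Ideal.span ((fun d => monomial d (1 : R)) '' (weightExponent w '' S)) := by
  rw [Ideal.map_span, Set.image_image, Set.image_image]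
  simp only [aeval_X_pow_monomial]

end MvPolynomial

theorem stmt_4 {K : Type*} [Field K] {n : ℕ} (I J : Ideal (MvPolynomial (Fin n) K))
    (hI : IsMonomialIdeal I) (hJ : IsMonomialIdeal J)
    (w : Fin n → ℕ) (hw : ∀ i, 1 ≤ w i) :
    Ideal.map (aeval fun i => (X i : MvPolynomial (Fin n) K) ^ w i) (I.colon J) =
      (Ideal.map (aeval fun i => (X i : MvPolynomial (Fin n) K) ^ w i) I).colon
        (Ideal.map (aeval fun i => (X i : MvPolynomial (Fin n) K) ^ w i) J) := by
  refine le_antisymm (Ideal.map_colon_le _ I J) fun r hr => ?_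
  obtain ⟨S, rfl⟩ := hI
  obtain ⟨T, rfl⟩ := hJ
  rw [map_aeval_X_pow_span_monomial_image, map_aeval_X_pow_span_monomial_image,
    mem_colon_span_monomial_image] at hr
  rw [r.as_sum]
  refine sum_mem fun d hd => ?_
  let e : Fin n →₀ ℕ := Finsupp.equivFunOnFinite.symm fun i => d i / w i
  have he : monomial e (1 : K) ∈ (Ideal.span ((fun d => monomial d (1 : K)) '' S)).colon
      (Ideal.span ((fun d => monomial d (1 : K)) '' T) : Ideal (MvPolynomial (Fin n) K)) := by
    rw [mem_colon_span_monomial_image]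
    intro a ha t ht
    obtain rfl : a = e := by simpa using support_monomial_subset ha
    obtain ⟨_, ⟨s, hs, rfl⟩, hle⟩ := hr d hd _ ⟨t, ht, rfl⟩
    refine ⟨s, hs, fun i => ?_⟩
    have hi : w i * s i ≤ d i + w i * t i := hle i
    change s i ≤ d i / w i + t i
    rw [← Nat.add_mul_div_left _ _ (hw i), Nat.le_div_iff_mul_le (hw i), mul_comm]
    exact hi
  have hmem := Ideal.mem_map_of_mem (aeval fun i => (X i : MvPolynomial (Fin n) K) ^ w i) he
  rw [aeval_X_pow_monomial] at hmem
  have hle : weightExponent w e ≤ d := fun i => Nat.mul_div_le (d i) (w i)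
  refine Ideal.mem_of_dvd _ ?_ hmem
  exact monomial_dvd_monomial.2 ⟨Or.inr hle, one_dvd _⟩
end

section
/- Let K be a field and n ≥ 3 an integer, and let ℓ0 ≥ 2 be an integer. Then there exist infinitely many monomial ideals in R = K[x_1,…,x_n] whose strong persistence index equals ℓ0; that is, the set of monomial ideals I ⊂ R such that ℓ0 is the smallest positive integer with (I^{ℓ+1} :_R I) = I^{ℓ} for all ℓ ≥ ℓ0 is infinite. -/
open MvPolynomial

/-- `l` is the strong persistence index of `I`: `l` is the smallest positive integer such that
`(I^(k+1) : I) = I^k` for all `k ≥ l`. -/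
def IsStrongPersistenceIndex {R : Type*} [CommRing R] (I : Ideal R) (l : ℕ) : Prop :=
  0 < l ∧ (∀ k, l ≤ k → (I ^ (k + 1)).colon I = I ^ k) ∧
    ∀ l', 0 < l' → (∀ k, l' ≤ k → (I ^ (k + 1)).colon I = I ^ k) → l ≤ l'

open scoped Pointwise

/-- Exponents `d` divisible by some `x ^ (p * b + r) * y ^ ((b + 1) * k - (p * b + r)) * z ^ (c * k)`
with `p, r ≤ k`, where `x, y, z` are the variables of index `i, j, l`. For `k = 1` these are the
multiples of `z ^ c * {y ^ (b + 1), x * y ^ b, x ^ b * y, x ^ (b + 1)}`. -/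
def gapExponents {σ : Type*} (i j l : σ) (b c k : ℕ) : Set (σ →₀ ℕ) :=
  {d | ∃ p r, p ≤ k ∧ r ≤ k ∧ p * b + r ≤ d i ∧ (b + 1) * k ≤ d j + (p * b + r) ∧ c * k ≤ d l}

/-- The ideal `z ^ c * (y ^ (b + 1), x * y ^ b, x ^ b * y, x ^ (b + 1))`. -/
noncomputable def gapIdeal {σ : Type*} (K : Type*) [Field K] (i j l : σ) (b c : ℕ) : Ideal (MvPolynomial σ K) :=
  Ideal.span ((fun d => monomial d (1 : K)) '' gapExponents i j l b c 1)

section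

variable {σ : Type*} {i j l : σ} {b c k : ℕ}

theorem gapExponents_mono {d e : σ →₀ ℕ} (hd : d ∈ gapExponents i j l b c k) (h : d ≤ e) :
    e ∈ gapExponents i j l b c k := by
  obtain ⟨p, r, hp, hr, h0, h1, h2⟩ := hd
  have := h i
  have := h j
  have := h l
  exact ⟨p, r, hp, hr, by omega, by omega, by omega⟩

theorem gapExponents_add (hij : i ≠ j) (hil : i ≠ l) (hjl : j ≠ l) :
    gapExponents i j l b c k + gapExponents i j l b c 1 = gapExponents i j l b c (k + 1) := by
  classical
  ext d
  rw [Set.mem_add]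
  constructor
  · rintro ⟨d, ⟨p, r, hp, hr, h0, h1, h2⟩, e, ⟨q, s, hq, hs, g0, g1, g2⟩, rfl⟩
    refine ⟨p + q, r + s, by omega, by omega, ?_, ?_, ?_⟩ <;>
      simp only [Finsupp.add_apply] <;> linarith
  · rintro ⟨p, r, hp, hr, h0, h1, h2⟩
    obtain ⟨p', q, hq, hp', rfl⟩ : ∃ p' q, q ≤ 1 ∧ p' ≤ k ∧ p = p' + q :=
      ⟨p - min p 1, min p 1, by omega, by omega, by omega⟩
    obtain ⟨r', s, hs, hr', rfl⟩ : ∃ r' s, s ≤ 1 ∧ r' ≤ k ∧ r = r' + s :=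
      ⟨r - min r 1, min r 1, by omega, by omega, by omega⟩
    have hqb : q * b + s ≤ b + 1 := by nlinarith
    have hpb : p' * b + r' ≤ (b + 1) * k := by nlinarith
    set g := q * b + s with hg
    have hsum : (p' + q) * b + (r' + s) = p' * b + r' + g := by rw [hg]; ring
    rw [hsum] at h0 h1
    rw [Nat.mul_succ] at h1 h2
    let e : σ →₀ ℕ := Finsupp.single i g + Finsupp.single j (b + 1 - g) + Finsupp.single l c
    have ei : e i = g := by simp [e, hij, hil]
    have ej : e j = b + 1 - g := by simp [e, hij.symm, hjl]
    have el : e l = c := by simp [e, hil.symm, hjl.symm]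
    have hle : e ≤ d := by
      intro t
      by_cases hti : t = i
      · subst hti; omega
      by_cases htj : t = j
      · subst htj; omega
      by_cases htl : t = l
      · subst htl; omega
      simp [e, Ne.symm hti, Ne.symm htj, Ne.symm htl]
    refine ⟨d - e, ⟨p', r', hp', hr', ?_, ?_, ?_⟩, e, ⟨q, s, hq, hs, ?_, ?_, ?_⟩,
      tsub_add_cancel_of_le hle⟩ <;>
      (try simp only [Finsupp.tsub_apply]) <;> omega

theorem add_le_of_mem_gapExponents {d : σ →₀ ℕ} (hd : d ∈ gapExponents i j l b c k) :
    (b + 1) * k ≤ d i + d j ∧ c * k ≤ d l := by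
  obtain ⟨p, r, hp, hr, h0, h1, h2⟩ := hd
  exact ⟨by omega, h2⟩

/-- From the power `b - 1` on there are no gaps left between the exponents. -/
theorem mem_gapExponents_iff (hb : 0 < b) (hk : b ≤ k + 1) {d : σ →₀ ℕ} :
    d ∈ gapExponents i j l b c k ↔ (b + 1) * k ≤ d i + d j ∧ c * k ≤ d l := by
  refine ⟨add_le_of_mem_gapExponents, fun ⟨h, h2⟩ => ?_⟩
  rcases le_or_gt (d i / b) k with hp | hp
  · have := Nat.mod_lt (d i) hb
    have := Nat.div_add_mod' (d i) b
    exact ⟨d i / b, d i % b, hp, by omega, by omega, by omega, h2⟩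
  · have hkb : (k + 1) * b ≤ d i := (Nat.le_div_iff_mul_le hb).1 hp
    have e1 : (k + 1) * b = k * b + b := by ring
    have e2 : (b + 1) * k = k * b + k := by ring
    by_cases hr : d i ≤ k * b + k
    · exact ⟨k, d i - k * b, le_rfl, by omega, by omega, by omega, h2⟩
    · exact ⟨k, k, le_rfl, le_rfl, by omega, by omega, h2⟩

variable {K : Type*} [Field K]

theorem gapIdeal_pow (hij : i ≠ j) (hil : i ≠ l) (hjl : j ≠ l) (k : ℕ) :
    gapIdeal K i j l b c ^ k =
      Ideal.span ((fun d => monomial d (1 : K)) '' gapExponents i j l b c k) := by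
  induction k with
  | zero =>
    rw [pow_zero, Ideal.one_eq_top, eq_comm, Ideal.eq_top_iff_one]
    exact Ideal.subset_span ⟨0, ⟨0, 0, by simp⟩, rfl⟩
  | succ k ih =>
    rw [pow_succ, ih, gapIdeal, Ideal.span_mul_span', ← gapExponents_add (k := k) hij hil hjl]
    congr 1
    ext f
    simp only [Set.mem_mul, Set.mem_image, Set.mem_add]
    constructor
    · rintro ⟨_, ⟨d, hd, rfl⟩, _, ⟨e, he, rfl⟩, rfl⟩
      exact ⟨d + e, ⟨d, hd, e, he, rfl⟩, by simp [monomial_mul]⟩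
    · rintro ⟨_, ⟨d, hd, e, he, rfl⟩, rfl⟩
      exact ⟨_, ⟨d, hd, rfl⟩, _, ⟨e, he, rfl⟩, by simp [monomial_mul]⟩

theorem mem_gapIdeal_pow_iff (hij : i ≠ j) (hil : i ≠ l) (hjl : j ≠ l) {f : MvPolynomial σ K} :
    f ∈ gapIdeal K i j l b c ^ k ↔ ∀ d ∈ f.support, d ∈ gapExponents i j l b c k := by
  rw [gapIdeal_pow hij hil hjl, mem_ideal_span_monomial_image]
  exact forall₂_congr fun d _ =>
    ⟨fun ⟨_, he, hle⟩ => gapExponents_mono he hle, fun hd => ⟨d, hd, le_rfl⟩⟩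

theorem monomial_mem_gapIdeal_pow_iff (hij : i ≠ j) (hil : i ≠ l) (hjl : j ≠ l) {d : σ →₀ ℕ} :
    monomial d (1 : K) ∈ gapIdeal K i j l b c ^ k ↔ d ∈ gapExponents i j l b c k := by
  classical
  rw [mem_gapIdeal_pow_iff hij hil hjl, support_monomial, if_neg one_ne_zero]
  simp

theorem single_add_single_mem_gapExponents (hil : i ≠ l) :
    Finsupp.single i (b + 1) + Finsupp.single l c ∈ gapExponents i j l b c 1 :=
  ⟨1, 1, le_rfl, le_rfl, by simp [hil], by simp, by simp⟩

theorem gapIdeal_colon (hij : i ≠ j) (hil : i ≠ l) (hjl : j ≠ l) (hb : 0 < b) (hk : b ≤ k + 1) :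
    (gapIdeal K i j l b c ^ (k + 1)).colon (gapIdeal K i j l b c) = gapIdeal K i j l b c ^ k := by
  classical
  apply le_antisymm
  · intro f hf
    rw [Submodule.mem_colon] at hf
    have hg : monomial (Finsupp.single i (b + 1) + Finsupp.single l c) (1 : K) ∈
        gapIdeal K i j l b c :=
      Ideal.subset_span ⟨_, single_add_single_mem_gapExponents hil, rfl⟩
    have hfg := hf _ hg
    rw [smul_eq_mul, mem_gapIdeal_pow_iff hij hil hjl] at hfg
    rw [mem_gapIdeal_pow_iff hij hil hjl]
    intro d hd
    have hmem := hfg (d + (Finsupp.single i (b + 1) + Finsupp.single l c)) (by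
      rw [mem_support_iff, coeff_mul_monomial, mul_one]
      exact mem_support_iff.1 hd)
    have := add_le_of_mem_gapExponents hmem
    rw [mem_gapExponents_iff hb hk]
    simp only [Finsupp.add_apply, Finsupp.single_eq_same, Finsupp.single_apply, hil, hij,
      hil.symm, hjl.symm, if_false, Nat.mul_succ] at this
    omega
  · intro f hf
    rw [Submodule.mem_colon]
    intro g hg
    rw [smul_eq_mul, pow_succ]
    exact Ideal.mul_mem_mul hf hg

theorem gapIdeal_colon_ne (hij : i ≠ j) (hil : i ≠ l) (hjl : j ≠ l) {m : ℕ} (hm : 0 < m) :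
    (gapIdeal K i j l (m + 2) c ^ (m + 1)).colon (gapIdeal K i j l (m + 2) c) ≠
      gapIdeal K i j l (m + 2) c ^ m := by
  classical
  intro h
  let d : σ →₀ ℕ := Finsupp.single i (m + 1) + Finsupp.single j ((m + 2 + 1) * m - (m + 1)) +
    Finsupp.single l (c * m)
  have di : d i = m + 1 := by simp [d, hij, hil]
  have dj : d j = (m + 2 + 1) * m - (m + 1) := by simp [d, hij.symm, hjl]
  have dl : d l = c * m := by simp [d, hil.symm, hjl.symm]
  have hm3 : m + 1 ≤ (m + 2 + 1) * m := by nlinarith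
  have hd : monomial d (1 : K) ∈
      (gapIdeal K i j l (m + 2) c ^ (m + 1)).colon (gapIdeal K i j l (m + 2) c) := by
    rw [Submodule.mem_colon]
    intro g hg
    have hg' : g ∈ gapIdeal K i j l (m + 2) c ^ 1 := by rwa [pow_one]
    rw [mem_gapIdeal_pow_iff hij hil hjl] at hg'
    rw [smul_eq_mul, mem_gapIdeal_pow_iff hij hil hjl]
    intro e he
    rw [mem_support_iff, coeff_monomial_mul', one_mul] at he
    have hle : d ≤ e := by
      by_contra hle
      simp [hle] at he
    rw [if_pos hle] at he
    have := hle i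
    have := hle j
    have := hle l
    have := add_le_of_mem_gapExponents (hg' _ (mem_support_iff.2 he))
    rw [mem_gapExponents_iff (by omega) (by omega), Nat.mul_succ, Nat.mul_succ]
    simp only [Finsupp.tsub_apply] at this
    omega
  rw [h, monomial_mem_gapIdeal_pow_iff hij hil hjl] at hd
  obtain ⟨p, r, hp, hr, h0, h1, -⟩ := hd
  rw [di] at h0
  rw [dj] at h1
  have hp0 : p = 0 := by
    by_contra hp0
    have : 1 * (m + 2) ≤ p * (m + 2) := Nat.mul_le_mul_right _ (by omega)
    omega
  subst hp0
  rw [zero_mul] at h1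
  omega

theorem gapIdeal_le_imp (hij : i ≠ j) (hil : i ≠ l) (hjl : j ≠ l) {c' : ℕ}
    (h : gapIdeal K i j l b c ≤ gapIdeal K i j l b c') : c' ≤ c := by
  have hmem : monomial (Finsupp.single i (b + 1) + Finsupp.single l c) (1 : K) ∈
      gapIdeal K i j l b c' :=
    h (Ideal.subset_span ⟨_, single_add_single_mem_gapExponents hil, rfl⟩)
  rw [← pow_one (gapIdeal K i j l b c'), monomial_mem_gapIdeal_pow_iff hij hil hjl] at hmem
  simpa [hil, hil.symm] using (add_le_of_mem_gapExponents hmem).2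

theorem gapIdeal_injective (hij : i ≠ j) (hil : i ≠ l) (hjl : j ≠ l) :
    Function.Injective (gapIdeal K i j l b) := fun _ _ h =>
  le_antisymm (gapIdeal_le_imp hij hil hjl h.ge) (gapIdeal_le_imp hij hil hjl h.le)

theorem isStrongPersistenceIndex_gapIdeal (hij : i ≠ j) (hil : i ≠ l) (hjl : j ≠ l) {m : ℕ}
    (hm : 0 < m) : IsStrongPersistenceIndex (gapIdeal K i j l (m + 2) c) (m + 1) := by
  refine ⟨by omega, fun k hk => gapIdeal_colon hij hil hjl (by omega) (by omega), ?_⟩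
  intro l' _ h
  by_contra hlt
  exact gapIdeal_colon_ne hij hil hjl hm (h m (by omega))

end

theorem stmt_9 {K : Type*} [Field K] (n : ℕ) (hn : 3 ≤ n) (l0 : ℕ) (hl0 : 2 ≤ l0) :
    {I : Ideal (MvPolynomial (Fin n) K) |
      IsMonomialIdeal I ∧ IsStrongPersistenceIndex I l0}.Infinite := by
  obtain ⟨m, rfl⟩ : ∃ m, l0 = m + 1 := ⟨l0 - 1, by omega⟩
  let i : Fin n := ⟨0, by omega⟩
  let j : Fin n := ⟨1, by omega⟩
  let l : Fin n := ⟨2, by omega⟩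
  have hij : i ≠ j := by simp [i, j]
  have hil : i ≠ l := by simp [i, l]
  have hjl : j ≠ l := by simp [j, l]
  exact Set.infinite_of_injective_forall_mem (gapIdeal_injective (b := m + 2) hij hil hjl)
    fun c => ⟨⟨_, rfl⟩, isStrongPersistenceIndex_gapIdeal hij hil hjl (by omega)⟩
end

section
/- Let K be a field, S = K[x_1,x_2,x_3], and let m, r ≥ 1 be integers. Let L = (x_1^{m+3}, x_2^{m+3}, x_1^{m+2}x_2, x_1 x_2^{m+2}, x_1^{m+1} x_2^{2} x_3^{r}) ⊂ S. Then for every integer s with 2 ≤ s ≤ m+1, the monomial u = x_1^{m+1} x_2^{(s-1)(m+1)+s-2} satisfies u ∈ (L^s :_S L) and u ∉ L^{s-1}; in particular (L^s :_S L) ≠ L^{s-1}. -/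
open MvPolynomial

/-- Powers of `I ⊔ (b)` lie in `I ⊔ (b ^ n)`. -/
lemma Ideal.sup_span_singleton_pow_le {R : Type*} [CommRing R] (I : Ideal R) (b : R) (n : ℕ) :
    (I ⊔ Ideal.span {b}) ^ n ≤ I ⊔ Ideal.span {b ^ n} := by
  induction n with
  | zero => simp
  | succ n ih =>
    rw [pow_succ]
    refine (Ideal.mul_mono_left ih).trans ?_
    rw [Ideal.sup_mul, Ideal.mul_sup (Ideal.span {b ^ n}),
      Ideal.span_singleton_mul_span_singleton, ← pow_succ]
    exact sup_le (Ideal.mul_le_left.trans le_sup_left)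
      (sup_le_sup_right Ideal.mul_le_right _)

/-- A monomial in `x₀, x₁` with small exponents avoids the ideal `(x₀ ^ a, x₂, x₁ ^ b)`. -/
lemma X_pow_mul_X_pow_notMem_span {K : Type*} [Field K] {a b i j : ℕ} (hi : i < a) (hj : j < b) :
    (X 0 : MvPolynomial (Fin 3) K) ^ i * X 1 ^ j ∉
      Ideal.span {X 0 ^ a, X 2} ⊔ Ideal.span {X 1 ^ b} := by
  have hspan : (Ideal.span {X 0 ^ a, X 2} ⊔ Ideal.span {X 1 ^ b} :
      Ideal (MvPolynomial (Fin 3) K)) = Ideal.span ((fun e => monomial e (1 : K)) ''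
        {Finsupp.single 0 a, Finsupp.single 2 1, Finsupp.single 1 b}) := by
    rw [← Ideal.span_union]
    simp only [Set.image_insert_eq, Set.image_singleton, X_pow_eq_monomial, Set.insert_union,
      Set.singleton_union]
    rfl
  have hmon : (X 0 : MvPolynomial (Fin 3) K) ^ i * X 1 ^ j =
      monomial (Finsupp.single 0 i + Finsupp.single 1 j) 1 := by
    simp [X_pow_eq_monomial, monomial_mul]
  classical
  rw [hspan, hmon, mem_ideal_span_monomial_image]
  intro h
  obtain ⟨e, he, hle⟩ := h (Finsupp.single 0 i + Finsupp.single 1 j) (by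
    simp [mem_support_iff, coeff_monomial])
  simp only [Set.mem_insert_iff, Set.mem_singleton_iff] at he
  rcases he with rfl | rfl | rfl
  · have := hle 0
    simp at this
    omega
  · have := hle 2
    simp at this
  · have := hle 1
    simp at this
    omega

theorem stmt_10 {K : Type*} [Field K] (m r : ℕ) (hm : 1 ≤ m) (hr : 1 ≤ r)
    (L : Ideal (MvPolynomial (Fin 3) K))
    (hL : L = Ideal.span {X 0 ^ (m + 3), X 1 ^ (m + 3), X 0 ^ (m + 2) * X 1,
      X 0 * X 1 ^ (m + 2), X 0 ^ (m + 1) * X 1 ^ 2 * X 2 ^ r}) :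
    ∀ s : ℕ, 2 ≤ s → s ≤ m + 1 →
      ((X 0 : MvPolynomial (Fin 3) K) ^ (m + 1) * X 1 ^ ((s - 1) * (m + 1) + s - 2) ∈
          (L ^ s).colon L ∧
        (X 0 : MvPolynomial (Fin 3) K) ^ (m + 1) * X 1 ^ ((s - 1) * (m + 1) + s - 2) ∉
          L ^ (s - 1)) ∧
      (L ^ s).colon L ≠ L ^ (s - 1) := by
  intro s hs hsm
  suffices h : (X 0 : MvPolynomial (Fin 3) K) ^ (m + 1) * X 1 ^ ((s - 1) * (m + 1) + s - 2) ∈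
      (L ^ s).colon L ∧
      (X 0 : MvPolynomial (Fin 3) K) ^ (m + 1) * X 1 ^ ((s - 1) * (m + 1) + s - 2) ∉
        L ^ (s - 1) from ⟨h, fun heq => h.2 (heq ▸ h.1)⟩
  obtain ⟨t, rfl⟩ := Nat.exists_eq_add_of_le' hs
  obtain ⟨k, rfl⟩ : ∃ k, m = t + 1 + k := Nat.exists_eq_add_of_le (by omega)
  have hexp : (t + 2 - 1) * (t + 1 + k + 1) + (t + 2) - 2 = (t + 1) * (t + 1 + k + 1) + t :=
    rfl
  rw [hexp, show t + 2 - 1 = t + 1 from rfl]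
  constructor
  · have hx : (X 0 : MvPolynomial (Fin 3) K) ^ (t + 1 + k + 3) ∈ L :=
      hL ▸ Ideal.subset_span (by simp)
    have hy : (X 1 : MvPolynomial (Fin 3) K) ^ (t + 1 + k + 3) ∈ L :=
      hL ▸ Ideal.subset_span (by simp)
    have hxy : (X 0 : MvPolynomial (Fin 3) K) ^ (t + 1 + k + 2) * X 1 ∈ L :=
      hL ▸ Ideal.subset_span (by simp)
    have hyx : (X 0 : MvPolynomial (Fin 3) K) * X 1 ^ (t + 1 + k + 2) ∈ L :=
      hL ▸ Ideal.subset_span (by simp)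
    have hmem : ∀ {p q w : MvPolynomial (Fin 3) K} (c : MvPolynomial (Fin 3) K), p ∈ L →
        q ∈ L ^ (t + 1) → w = c * (q * p) → w ∈ L ^ (t + 2) := by
      rintro p q w c hp hq rfl
      exact Ideal.mul_mem_left _ c (pow_succ L (t + 1) ▸ Ideal.mul_mem_mul hq hp)
    have hmix := pow_succ L t ▸ Ideal.mul_mem_mul (Ideal.pow_mem_pow hy t) hxy
    have hle : L ≤ Submodule.comap (LinearMap.mulLeft (MvPolynomial (Fin 3) K)
        (X 0 ^ (t + 1 + k + 1) * X 1 ^ ((t + 1) * (t + 1 + k + 1) + t))) (L ^ (t + 2)) := by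
      conv_lhs => rw [hL]
      rw [Ideal.span, Submodule.span_le]
      rintro p (rfl | rfl | rfl | rfl | rfl) <;>
        simp only [SetLike.mem_coe, Submodule.mem_comap, LinearMap.mulLeft_apply]
      · exact hmem (X 1 ^ k) hxy hmix (by ring)
      · exact hmem (X 0 ^ k) hyx (Ideal.pow_mem_pow hyx (t + 1)) (by ring)
      · exact hmem (X 0 ^ k) hx (Ideal.pow_mem_pow hyx (t + 1)) (by ring)
      · exact hmem (X 1 ^ k) hxy (Ideal.pow_mem_pow hy (t + 1)) (by ring)
      · exact hmem (X 0 ^ k * X 2 ^ r) hxy (Ideal.pow_mem_pow hyx (t + 1)) (by ring)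
    rw [Submodule.mem_colon]
    exact fun p hp => hle hp
  · intro hu
    have hJ : L ≤ Ideal.span {X 0 ^ (t + 1 + k + 2), X 2} ⊔
        Ideal.span {X 1 ^ (t + 1 + k + 2)} := by
      have hx : (X 0 : MvPolynomial (Fin 3) K) ^ (t + 1 + k + 2) ∈
          Ideal.span {X 0 ^ (t + 1 + k + 2), X 2} ⊔ Ideal.span {X 1 ^ (t + 1 + k + 2)} :=
        Ideal.mem_sup_left (Ideal.subset_span (by simp))
      have hz : (X 2 : MvPolynomial (Fin 3) K) ∈
          Ideal.span {X 0 ^ (t + 1 + k + 2), X 2} ⊔ Ideal.span {X 1 ^ (t + 1 + k + 2)} :=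
        Ideal.mem_sup_left (Ideal.subset_span (by simp))
      have hy : (X 1 : MvPolynomial (Fin 3) K) ^ (t + 1 + k + 2) ∈
          Ideal.span {X 0 ^ (t + 1 + k + 2), X 2} ⊔ Ideal.span {X 1 ^ (t + 1 + k + 2)} :=
        Ideal.mem_sup_right (Ideal.subset_span (by simp))
      rw [hL, Ideal.span_le]
      rintro p (rfl | rfl | rfl | rfl | rfl)
      · exact Ideal.pow_mem_of_pow_mem _ hx (by omega)
      · exact Ideal.pow_mem_of_pow_mem _ hy (by omega)
      · exact Ideal.mul_mem_right _ _ hx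
      · exact Ideal.mul_mem_left _ _ hy
      · exact Ideal.mul_mem_left _ _ (Ideal.pow_mem_of_mem _ hz r hr)
    have hmem := Ideal.sup_span_singleton_pow_le _ _ _ (Ideal.pow_right_mono hJ (t + 1) hu)
    rw [← pow_mul] at hmem
    exact X_pow_mul_X_pow_notMem_span (by omega) (by nlinarith) hmem
end

section
/- Let K be a field, S = K[x_1,x_2,x_3], and let m, r ≥ 1 be integers. Let L = (x_1^{m+3}, x_2^{m+3}, x_1^{m+2}x_2, x_1 x_2^{m+2}, x_1^{m+1} x_2^{2} x_3^{r}) ⊂ S. Then for every integer s ≥ m+2, (L^s :_S L) = L^{s-1}. -/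
open MvPolynomial

/-- The monomials of degree at least `k` in the first two variables span this ideal,
which is `(x₁, x₂) ^ k`. -/
noncomputable def pairPow (K : Type*) [Field K] (k : ℕ) : Ideal (MvPolynomial (Fin 3) K) :=
  Ideal.span ((fun e : Fin 3 →₀ ℕ => monomial e (1 : K)) '' {e | k ≤ e 0 + e 1})

theorem mem_pairPow {K : Type*} [Field K] {k : ℕ} {f : MvPolynomial (Fin 3) K} :
    f ∈ pairPow K k ↔ ∀ u ∈ f.support, k ≤ u 0 + u 1 := by
  rw [pairPow, mem_ideal_span_monomial_image]
  constructor
  · intro h u hu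
    obtain ⟨e, he, hle⟩ := h u hu
    exact le_trans he (add_le_add (hle 0) (hle 1))
  · exact fun h u hu => ⟨u, h u hu, le_rfl⟩

theorem X_pow_mul_mem_pairPow {K : Type*} [Field K] {a b c k : ℕ} (h : k ≤ a + b) :
    (X 0 ^ a * X 1 ^ b * X 2 ^ c : MvPolynomial (Fin 3) K) ∈ pairPow K k := by
  refine Ideal.subset_span ⟨Finsupp.single 0 a + Finsupp.single 1 b + Finsupp.single 2 c, ?_, ?_⟩
  · simpa using h
  · simp [X_pow_eq_monomial, monomial_mul]

theorem pairPow_mul_le {K : Type*} [Field K] (a b : ℕ) :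
    pairPow K a * pairPow K b ≤ pairPow K (a + b) := by
  rw [pairPow, pairPow, Ideal.span_mul_span', Ideal.span_le]
  rintro _ ⟨_, ⟨e, he, rfl⟩, _, ⟨e', he', rfl⟩, rfl⟩
  refine Ideal.subset_span ⟨e + e', ?_, ?_⟩
  · simp only [Set.mem_ofPred_eq, Finsupp.add_apply] at *
    omega
  · simp [monomial_mul]

theorem pow_le_pairPow {K : Type*} [Field K] {L : Ideal (MvPolynomial (Fin 3) K)} {d : ℕ}
    (hL : L ≤ pairPow K d) (t : ℕ) : L ^ t ≤ pairPow K (d * t) := by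
  induction t with
  | zero => exact fun f _ => mem_pairPow.2 (by simp)
  | succ t ih =>
    rw [pow_succ, mul_add, mul_one]
    exact (Ideal.mul_mono ih hL).trans (pairPow_mul_le _ _)

theorem mem_pairPow_of_mul_X_pow_mem {K : Type*} [Field K] {d k : ℕ}
    {f : MvPolynomial (Fin 3) K} (h : f * X 0 ^ d ∈ pairPow K (k + d)) : f ∈ pairPow K k := by
  rw [mem_pairPow] at h ⊢
  intro u hu
  have := h (u + Finsupp.single 0 d) (by
    rw [mem_support_iff] at hu ⊢
    rwa [X_pow_eq_monomial, coeff_mul_monomial, mul_one])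
  simp at this
  omega

/-- Every `b ≤ (n + 1) * t` is a sum of `t` elements of `{0, 1, n, n + 1}` once `n ≤ t + 1`. -/
theorem exists_sum_of_le {n t b : ℕ} (hn : 0 < n) (ht : n ≤ t + 1) (hb : b ≤ (n + 1) * t) :
    ∃ p q u v, p + q + u + v = t ∧ b = (n + 1) * p + n * q + u := by
  have hmod := Nat.div_add_mod b n
  have hlt := Nat.mod_lt b hn
  generalize b / n = j at *
  generalize b % n = e at *
  by_cases hj : t ≤ j
  · obtain ⟨c, hc⟩ : ∃ c, b = n * t + c :=
      Nat.exists_eq_add_of_le (by nlinarith [Nat.mul_le_mul_left n hj])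
    obtain ⟨q, rfl⟩ : ∃ q, t = c + q := Nat.exists_eq_add_of_le (by nlinarith)
    exact ⟨c, q, 0, 0, by omega, by rw [hc]; ring⟩
  · rcases le_total e j with h | h
    · obtain ⟨q, rfl⟩ := Nat.exists_eq_add_of_le h
      exact ⟨e, q, 0, t - (e + q), by omega, by rw [← hmod]; ring⟩
    · obtain ⟨u, rfl⟩ := Nat.exists_eq_add_of_le h
      exact ⟨j, 0, u, t - (j + u), by omega, by rw [← hmod]; ring⟩

theorem pairPow_le_pow {K : Type*} [Field K] {L : Ideal (MvPolynomial (Fin 3) K)} {n t : ℕ}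
    (hn : 0 < n) (ht : n ≤ t + 1) (h₀ : X 0 ^ (n + 1) ∈ L) (h₁ : X 1 ^ (n + 1) ∈ L)
    (h₂ : X 0 ^ n * X 1 ∈ L) (h₃ : X 0 * X 1 ^ n ∈ L) :
    pairPow K ((n + 1) * t) ≤ L ^ t := by
  rw [pairPow, Ideal.span_le]
  rintro _ ⟨e, he, rfl⟩
  simp only [Set.mem_ofPred_eq] at he
  obtain ⟨a, b, ha, hb, hab⟩ : ∃ a b, a ≤ e 0 ∧ b ≤ e 1 ∧ a + b = (n + 1) * t := by
    generalize (n + 1) * t = N at *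
    exact ⟨min (e 0) N, N - min (e 0) N, by omega, by omega, by omega⟩
  obtain ⟨p, q, u, v, hsum, hbe⟩ := exists_sum_of_le hn ht (show b ≤ (n + 1) * t by omega)
  have hae : a = q + n * u + (n + 1) * v := by
    rw [← hsum, hbe] at hab
    linarith
  have hmem : (X 0 ^ a * X 1 ^ b : MvPolynomial (Fin 3) K) ∈ L ^ t := by
    have h := Ideal.mul_mem_mul (Ideal.mul_mem_mul (Ideal.mul_mem_mul
      (Ideal.pow_mem_pow h₁ p) (Ideal.pow_mem_pow h₃ q)) (Ideal.pow_mem_pow h₂ u))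
      (Ideal.pow_mem_pow h₀ v)
    rw [← pow_add, ← pow_add, ← pow_add, hsum] at h
    convert h using 1
    rw [hae, hbe]
    ring
  have hdvd : (X 0 ^ a * X 1 ^ b : MvPolynomial (Fin 3) K) ∣ monomial e 1 := by
    rw [monomial_eq, Finsupp.prod_fintype _ _ (by simp), Fin.prod_univ_three, map_one, one_mul]
    exact Dvd.dvd.mul_right (mul_dvd_mul (pow_dvd_pow _ ha) (pow_dvd_pow _ hb)) _
  exact Ideal.mem_of_dvd _ hdvd hmem

theorem stmt_11 {K : Type*} [Field K] (m r : ℕ) (hm : 1 ≤ m) (hr : 1 ≤ r)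
    (L : Ideal (MvPolynomial (Fin 3) K))
    (hL : L = Ideal.span {X 0 ^ (m + 3), X 1 ^ (m + 3), X 0 ^ (m + 2) * X 1,
      X 0 * X 1 ^ (m + 2), X 0 ^ (m + 1) * X 1 ^ 2 * X 2 ^ r}) :
    ∀ s : ℕ, m + 2 ≤ s → (L ^ s).colon L = L ^ (s - 1) := by
  intro s hs
  obtain ⟨t, rfl⟩ : ∃ t, s = t + 1 := ⟨s - 1, by omega⟩
  rw [Nat.add_sub_cancel]
  have h₀ : X 0 ^ (m + 3) ∈ L := hL ▸ Ideal.subset_span (by simp)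
  have hle : L ≤ pairPow K (m + 3) := by
    rw [hL, Ideal.span_le]
    rintro f (rfl | rfl | rfl | rfl | rfl)
    · simpa using X_pow_mul_mem_pairPow (K := K) (a := m + 3) (b := 0) (c := 0) le_rfl
    · simpa using X_pow_mul_mem_pairPow (K := K) (a := 0) (b := m + 3) (c := 0) (by omega)
    · simpa using X_pow_mul_mem_pairPow (K := K) (a := m + 2) (b := 1) (c := 0) le_rfl
    · simpa using X_pow_mul_mem_pairPow (K := K) (k := m + 3) (a := 1) (b := m + 2) (c := 0)
        (by omega)
    · exact X_pow_mul_mem_pairPow le_rfl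
  apply le_antisymm
  · intro f hf
    have hmul : f * X 0 ^ (m + 3) ∈ L ^ (t + 1) := Submodule.mem_colon.1 hf _ h₀
    refine pairPow_le_pow (n := m + 2) (by omega) (by omega) h₀ (hL ▸ Ideal.subset_span (by simp))
      (hL ▸ Ideal.subset_span (by simp)) (hL ▸ Ideal.subset_span (by simp))
      (mem_pairPow_of_mul_X_pow_mem (d := m + 3) ?_)
    exact pow_le_pairPow hle (t + 1) hmul
  · intro f hf
    refine Submodule.mem_colon.2 fun g hg => ?_
    rw [pow_succ]
    exact Ideal.mul_mem_mul hf hg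
end

section
/- Let K be a field, T = K[x_1,x_2], and let m ≥ 1 be an integer. Let J = (x_1^{m+3}, x_2^{m+3}, x_1^{m+2}x_2, x_1 x_2^{m+2}, x_1^{m+1} x_2^{2}) ⊂ T. Then for every integer s ≥ m+2, (J^s :_T x_1^{m+3}) ⊆ J^{s-1}, and consequently (J^s :_T J) = J^{s-1}. -/
open MvPolynomial

/-- Every exponent vector `(u, v)` of total degree `(m + 3) * t` with `t > m` is a sum of `t` of the
vectors `(m + 3, 0)`, `(m + 2, 1)`, `(1, m + 2)`, `(0, m + 3)`. -/
theorem exists_exponent_decomposition {m t u v : ℕ} (ht : m + 1 ≤ t) (huv : u + v = (m + 3) * t) :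
    ∃ a b c d : ℕ, a + b + c + d = t ∧ u = (m + 3) * a + (m + 2) * b + c ∧
      v = b + (m + 2) * c + (m + 3) * d := by
  obtain ⟨j, r, hj, hr, hv⟩ : ∃ j r : ℕ, j ≤ t ∧ r ≤ t ∧ v = (m + 2) * j + r := by
    by_cases h : v / (m + 2) ≤ t
    · have hlt : v % (m + 2) < m + 2 := Nat.mod_lt _ (by omega)
      exact ⟨v / (m + 2), v % (m + 2), h, by omega, (Nat.div_add_mod _ _).symm⟩
    · have hle : t * (m + 2) ≤ v := (Nat.le_div_iff_mul_le (by omega)).1 (by omega)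
      refine ⟨t, v - (m + 2) * t, le_rfl, ?_, ?_⟩ <;> grind
  rcases le_total r j with h | h
  · obtain ⟨c, rfl⟩ := Nat.exists_eq_add_of_le h
    obtain ⟨a, rfl⟩ := Nat.exists_eq_add_of_le hj
    exact ⟨a, 0, c, r, by ring, by grind, by grind⟩
  · obtain ⟨b, rfl⟩ := Nat.exists_eq_add_of_le h
    obtain ⟨a, rfl⟩ := Nat.exists_eq_add_of_le hr
    exact ⟨a, b, 0, j, by ring, by grind, by grind⟩

theorem idealOfVars_pow_le_pow {R : Type*} [CommSemiring R] {m t : ℕ} (ht : m + 1 ≤ t)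
    {J : Ideal (MvPolynomial (Fin 2) R)} (h₀ : X 0 ^ (m + 3) ∈ J) (h₁ : X 0 ^ (m + 2) * X 1 ∈ J)
    (h₂ : X 0 * X 1 ^ (m + 2) ∈ J) (h₃ : X 1 ^ (m + 3) ∈ J) :
    idealOfVars (Fin 2) R ^ ((m + 3) * t) ≤ J ^ t := by
  rw [pow_idealOfVars_eq_span, Ideal.span_le]
  rintro _ ⟨e, he, rfl⟩
  have he' : e 0 + e 1 = (m + 3) * t := by
    simpa [Finsupp.degree_eq_sum] using he
  obtain ⟨a, b, c, d, rfl, h0, h1⟩ := exists_exponent_decomposition ht he'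
  have hprod : (monomial e (1 : R)) = (X 0 ^ (m + 3)) ^ a * (X 0 ^ (m + 2) * X 1) ^ b *
      (X 0 * X 1 ^ (m + 2)) ^ c * (X 1 ^ (m + 3)) ^ d := by
    rw [monomial_eq, Finsupp.prod_fintype _ _ (by simp), Fin.prod_univ_two, h0, h1, C_1]
    ring
  simp only [SetLike.mem_coe, hprod, pow_add J]
  exact Ideal.mul_mem_mul (Ideal.mul_mem_mul (Ideal.mul_mem_mul (Ideal.pow_mem_pow h₀ a)
    (Ideal.pow_mem_pow h₁ b)) (Ideal.pow_mem_pow h₂ c)) (Ideal.pow_mem_pow h₃ d)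

theorem mem_idealOfVars_pow_of_mul_X_pow_mem {σ R : Type*} [CommSemiring R] {i : σ} {k n : ℕ}
    {f : MvPolynomial σ R} (h : f * X i ^ k ∈ idealOfVars σ R ^ (n + k)) :
    f ∈ idealOfVars σ R ^ n := by
  rw [mem_pow_idealOfVars_iff'] at h ⊢
  intro e he
  have := h (e + Finsupp.single i k) (by simpa using he)
  rwa [X_pow_eq_monomial, coeff_mul_monomial, mul_one] at this

theorem stmt_12 {K : Type*} [Field K] (m : ℕ) (hm : 1 ≤ m)
    (J : Ideal (MvPolynomial (Fin 2) K))
    (hJ : J = Ideal.span {X 0 ^ (m + 3), X 1 ^ (m + 3), X 0 ^ (m + 2) * X 1,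
      X 0 * X 1 ^ (m + 2), X 0 ^ (m + 1) * X 1 ^ 2}) :
    ∀ s : ℕ, m + 2 ≤ s →
      (J ^ s).colon (Ideal.span {(X 0 : MvPolynomial (Fin 2) K) ^ (m + 3)}) ≤ J ^ (s - 1) ∧
      (J ^ s).colon J = J ^ (s - 1) := by
  intro s hs
  obtain ⟨t, rfl⟩ : ∃ t, s = t + 1 := ⟨s - 1, by omega⟩
  rw [Nat.add_sub_cancel]
  have hX (i : Fin 2) (k : ℕ) : (X i : MvPolynomial (Fin 2) K) ^ k ∈ idealOfVars (Fin 2) K ^ k :=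
    Ideal.pow_mem_pow (Ideal.subset_span (Set.mem_range_self i)) k
  have hJle : J ≤ idealOfVars (Fin 2) K ^ (m + 3) := by
    have hmul (k l : ℕ) (h : k + l = m + 3) : (X 0 : MvPolynomial (Fin 2) K) ^ k * X 1 ^ l ∈
        idealOfVars (Fin 2) K ^ (m + 3) := by
      rw [← h, pow_add]
      exact Ideal.mul_mem_mul (hX 0 k) (hX 1 l)
    rw [hJ, Ideal.span_le]
    rintro f (rfl | rfl | rfl | rfl | rfl)
    · exact hX 0 _
    · exact hX 1 _
    · simpa using hmul (m + 2) 1 (by omega)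
    · simpa using hmul 1 (m + 2) (by omega)
    · exact hmul (m + 1) 2 (by omega)
  have hX0 : X 0 ^ (m + 3) ∈ J := hJ ▸ Ideal.subset_span (by simp)
  have hpow : idealOfVars (Fin 2) K ^ ((m + 3) * t) ≤ J ^ t :=
    idealOfVars_pow_le_pow (by omega) hX0 (hJ ▸ Ideal.subset_span (by simp))
      (hJ ▸ Ideal.subset_span (by simp)) (hJ ▸ Ideal.subset_span (by simp))
  have hcolon : (J ^ (t + 1)).colon (Ideal.span {(X 0 : MvPolynomial (Fin 2) K) ^ (m + 3)}) ≤
      J ^ t := by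
    intro f hf
    rw [Ideal.mem_colon_span_singleton] at hf
    apply hpow
    apply mem_idealOfVars_pow_of_mul_X_pow_mem (i := 0) (k := m + 3)
    have := Ideal.pow_right_mono hJle (t + 1) hf
    rwa [← pow_mul, mul_add_one] at this
  refine ⟨hcolon, le_antisymm (le_trans (Submodule.colon_mono le_rfl ?_) hcolon) fun f hf => ?_⟩
  · exact (Ideal.span_singleton_le_iff_mem J).2 hX0
  · exact Submodule.mem_colon.2 fun g hg => Ideal.mul_mem_mul hf hg
end

section
/- Let R be a commutative Noetherian ring, let I be an ideal of R, and let k ≥ 1 be an integer. Suppose ℓ0 is the strong persistence index of I and ℓ0' is the strong persistence index of I^k. Then ℓ0' < ℓ0/k + 1; equivalently, k(ℓ0' − 1) < ℓ0. -/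
theorem Ideal.pow_add_colon_pow_eq_pow {R : Type*} [CommRing R] {I : Ideal R} {l : ℕ}
    (h : ∀ n, l ≤ n → (I ^ (n + 1)).colon I = I ^ n) {n : ℕ} (hn : l ≤ n) (j : ℕ) :
    (I ^ (n + j)).colon (I ^ j : Ideal R) = I ^ n := by
  refine le_antisymm ?_ fun r hr => Submodule.mem_colon.2 fun a ha => ?_
  · induction j with
    | zero => simp
    | succ j ih =>
      refine fun r hr => ih (Submodule.mem_colon.2 fun a ha => ?_)
      rw [← h (n + j) (by omega)]
      refine Submodule.mem_colon.2 fun b hb => ?_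
      have hab : a * b ∈ I ^ (j + 1) := pow_succ I j ▸ Ideal.mul_mem_mul ha hb
      simpa only [smul_eq_mul, mul_assoc, add_assoc] using Submodule.mem_colon.1 hr _ hab
  · rw [smul_eq_mul, pow_add]
    exact Ideal.mul_mem_mul hr ha

theorem stmt_14 {R : Type*} [CommRing R] [IsNoetherianRing R] (I : Ideal R) (k : ℕ) (hk : 1 ≤ k)
    (l0 l0' : ℕ) (h : IsStrongPersistenceIndex I l0)
    (h' : IsStrongPersistenceIndex (I ^ k) l0') :
    k * (l0' - 1) < l0 := by
  obtain ⟨hl0, hcolon, -⟩ := h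
  obtain ⟨-, -, hmin⟩ := h'
  by_contra! hle
  have hpos : 0 < l0' - 1 := Nat.pos_of_mul_pos_left (hl0.trans_le hle)
  have hl' : l0' ≤ l0' - 1 := by
    refine hmin _ hpos fun n hn => ?_
    rw [← pow_mul, ← pow_mul, mul_add, mul_one]
    exact Ideal.pow_add_colon_pow_eq_pow hcolon (hle.trans (Nat.mul_le_mul_left k hn)) k
  omega
end

section
/- Let R be a commutative Noetherian ring, let I be an ideal of R, and let k ≥ 1 be an integer. Suppose ℓ0 is the strong persistence index of I and ℓ0' is the strong persistence index of I^k. Then ℓ0' ≤ ℓ0. -/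
/-- If `(I ^ (m + 1) : I) = I ^ m` for all `m ≥ l`, then `(I ^ (n + j) : I ^ j) = I ^ n` for all
`n ≥ l` and all `j`. -/
theorem Ideal.colon_pow_add_eq_pow {R : Type*} [CommRing R] {I : Ideal R} {l : ℕ}
    (h : ∀ m, l ≤ m → (I ^ (m + 1)).colon I = I ^ m) {n : ℕ} (hn : l ≤ n) (j : ℕ) :
    (I ^ (n + j)).colon (I ^ j : Ideal R) = I ^ n := by
  refine le_antisymm (fun r hr => ?_) fun r hr => Submodule.mem_colon.2 fun s hs => ?_
  · induction j with
    | zero => simpa using Submodule.mem_colon.1 hr 1 (by simp)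
    | succ j ih =>
      refine ih (Submodule.mem_colon.2 fun s hs => ?_)
      rw [← h (n + j) (by omega)]
      refine Submodule.mem_colon.2 fun t ht => ?_
      have hst : s * t ∈ I ^ (j + 1) := pow_succ I j ▸ Ideal.mul_mem_mul hs ht
      simpa [mul_assoc, add_assoc] using Submodule.mem_colon.1 hr _ hst
  · exact pow_add I n j ▸ Ideal.mul_mem_mul hr hs

theorem stmt_15 {R : Type*} [CommRing R] [IsNoetherianRing R] (I : Ideal R) (k : ℕ) (hk : 1 ≤ k)
    (l0 l0' : ℕ) (h : IsStrongPersistenceIndex I l0)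
    (h' : IsStrongPersistenceIndex (I ^ k) l0') :
    l0' ≤ l0 := by
  refine h'.2.2 l0 h.1 fun m hm => ?_
  rw [← pow_mul, ← pow_mul, Nat.mul_succ]
  exact Ideal.colon_pow_add_eq_pow h.2.1 (hm.trans (Nat.le_mul_of_pos_left m hk)) k
end

section
/- Let K be a field, R = K[x,y], and J = (x^7, y^7, x^2 y^5, x^5 y^2) ⊂ R. Then (J^2 : J) ≠ J, (J^3 : J) = J^2, (J^4 : J) ≠ J^3, and (J^5 : J) = J^4; in particular J has the phenomenon of fluctuation in colon powers. -/
open MvPolynomial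

/-- `I` has the phenomenon of fluctuation in colon powers. -/
def HasFluctuationInColonPowers {R : Type*} [CommRing R] (I : Ideal R) : Prop :=
  ∃ a b c : ℕ, 0 < a ∧ a < b ∧ b < c ∧
    (((I ^ a).colon I = I ^ (a - 1) ∧ (I ^ b).colon I ≠ I ^ (b - 1) ∧
        (I ^ c).colon I = I ^ (c - 1)) ∨
      ((I ^ a).colon I ≠ I ^ (a - 1) ∧ (I ^ b).colon I = I ^ (b - 1) ∧
        (I ^ c).colon I ≠ I ^ (c - 1)))

open Pointwise in
/-- The `n`-fold sums of elements of `A`. -/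
def iteratedSumset (A : Finset ℕ) : ℕ → Finset ℕ
  | 0 => {0}
  | n + 1 => iteratedSumset A n + A

/-- The exponents `(i, j)` of the monomials lying in the `n`-th power of the ideal generated by the
monomials `x ^ a * y ^ (d - a)` with `a ∈ A`. -/
def IsPowExponent (d : ℕ) (A : Finset ℕ) (n i j : ℕ) : Prop :=
  ∃ a ∈ iteratedSumset A n, a ≤ i ∧ d * n ≤ a + j

instance (d : ℕ) (A : Finset ℕ) (n i j : ℕ) : Decidable (IsPowExponent d A n i j) :=
  inferInstanceAs (Decidable (∃ a ∈ iteratedSumset A n, a ≤ i ∧ d * n ≤ a + j))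

/-- The exponent vector `(i, j)` of a monomial in two variables. -/
noncomputable def planeExponent (i j : ℕ) : Fin 2 →₀ ℕ :=
  Finsupp.single 0 i + Finsupp.single 1 j

@[simp]
theorem planeExponent_zero (i j : ℕ) : planeExponent i j 0 = i := by
  simp [planeExponent]

@[simp]
theorem planeExponent_one (i j : ℕ) : planeExponent i j 1 = j := by
  simp [planeExponent]

theorem planeExponent_le_iff (i j : ℕ) (m : Fin 2 →₀ ℕ) :
    planeExponent i j ≤ m ↔ i ≤ m 0 ∧ j ≤ m 1 := by
  simp [Finsupp.le_def, Fin.forall_fin_two]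

theorem planeExponent_add (i j k l : ℕ) :
    planeExponent i j + planeExponent k l = planeExponent (i + k) (j + l) := by
  ext t
  fin_cases t <;> simp

theorem le_of_mem_iteratedSumset {d : ℕ} {A : Finset ℕ} (hA : ∀ a ∈ A, a ≤ d) {n a : ℕ}
    (ha : a ∈ iteratedSumset A n) : a ≤ d * n := by
  induction n generalizing a with
  | zero => simpa [iteratedSumset] using ha
  | succ n ih =>
    obtain ⟨b, hb, c, hc, rfl⟩ := Finset.mem_add.1 ha
    exact add_le_add (ih hb) (hA c hc)

section

variable {K : Type*} [Field K]

variable (K) in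
/-- The ideal of `K[x, y]` generated by the monomials `x ^ a * y ^ (d - a)` with `a ∈ A`. -/
noncomputable def homogeneousMonomialIdeal (d : ℕ) (A : Finset ℕ) :
    Ideal (MvPolynomial (Fin 2) K) :=
  Ideal.span ((fun s => monomial s (1 : K)) '' ((fun a => planeExponent a (d - a)) '' A))

theorem homogeneousMonomialIdeal_pow {d : ℕ} {A : Finset ℕ} (hA : ∀ a ∈ A, a ≤ d) (n : ℕ) :
    homogeneousMonomialIdeal K d A ^ n =
      homogeneousMonomialIdeal K (d * n) (iteratedSumset A n) := by
  induction n with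
  | zero =>
    have h : planeExponent 0 0 = 0 := by simp [planeExponent]
    simp [homogeneousMonomialIdeal, iteratedSumset, h]
  | succ n ih =>
    have key : ∀ a ∈ iteratedSumset A n, ∀ b ∈ A,
        planeExponent a (d * n - a) + planeExponent b (d - b) =
          planeExponent (a + b) (d * (n + 1) - (a + b)) := by
      intro a ha b hb
      have h₁ := le_of_mem_iteratedSumset hA ha
      have h₂ := hA b hb
      rw [planeExponent_add, mul_add_one]
      congr 1
      omega
    rw [pow_succ, ih]
    simp only [homogeneousMonomialIdeal]
    rw [Ideal.span_mul_span']
    congr 1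
    ext p
    simp only [Set.mem_mul, Set.mem_image, SetLike.mem_coe]
    constructor
    · rintro ⟨_, ⟨_, ⟨a, ha, rfl⟩, rfl⟩, _, ⟨_, ⟨b, hb, rfl⟩, rfl⟩, rfl⟩
      exact ⟨_, ⟨a + b, Finset.add_mem_add ha hb, rfl⟩, by simp [monomial_mul, key a ha b hb]⟩
    · rintro ⟨_, ⟨c, hc, rfl⟩, rfl⟩
      obtain ⟨a, ha, b, hb, rfl⟩ := Finset.mem_add.1 hc
      exact ⟨_, ⟨_, ⟨a, ha, rfl⟩, rfl⟩, _, ⟨_, ⟨b, hb, rfl⟩, rfl⟩,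
        by simp [monomial_mul, key a ha b hb]⟩

theorem mem_homogeneousMonomialIdeal_pow {d : ℕ} {A : Finset ℕ} (hA : ∀ a ∈ A, a ≤ d) (n : ℕ)
    (p : MvPolynomial (Fin 2) K) :
    p ∈ homogeneousMonomialIdeal K d A ^ n ↔
      ∀ m ∈ p.support, IsPowExponent d A n (m 0) (m 1) := by
  rw [homogeneousMonomialIdeal_pow hA, homogeneousMonomialIdeal, mem_ideal_span_monomial_image]
  simp [IsPowExponent, planeExponent_le_iff, add_comm]

theorem mem_colon_homogeneousMonomialIdeal {d : ℕ} {A : Finset ℕ} (hA : ∀ a ∈ A, a ≤ d) (n : ℕ)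
    (p : MvPolynomial (Fin 2) K) :
    p ∈ (homogeneousMonomialIdeal K d A ^ n).colon (homogeneousMonomialIdeal K d A) ↔
      ∀ m ∈ p.support, ∀ a ∈ A, IsPowExponent d A n (m 0 + a) (m 1 + (d - a)) := by
  rw [homogeneousMonomialIdeal.eq_def K d A, Submodule.colon_span, ← homogeneousMonomialIdeal,
    Submodule.mem_colon]
  simp only [Set.forall_mem_image, smul_eq_mul, mem_homogeneousMonomialIdeal_pow hA]
  constructor
  · intro h m hm a ha
    have := h ha (m + planeExponent a (d - a)) (by simpa [mem_support_iff] using hm)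
    simpa using this
  · intro h a ha m hm
    rw [mem_support_iff, coeff_mul_monomial'] at hm
    split_ifs at hm with hle
    · have := h (m - planeExponent a (d - a)) (by simpa [mem_support_iff] using hm) a ha
      obtain ⟨h₀, h₁⟩ := (planeExponent_le_iff _ _ _).1 hle
      simpa [h₀, h₁] using this
    · exact absurd rfl hm

theorem colon_homogeneousMonomialIdeal_pow_eq_iff {d : ℕ} {A : Finset ℕ} (hA : ∀ a ∈ A, a ≤ d)
    (n : ℕ) :
    (homogeneousMonomialIdeal K d A ^ (n + 1)).colon (homogeneousMonomialIdeal K d A) =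
        homogeneousMonomialIdeal K d A ^ n ↔
      ∀ i j, (∀ a ∈ A, IsPowExponent d A (n + 1) (i + a) (j + (d - a))) →
        IsPowExponent d A n i j := by
  constructor
  · intro h i j hij
    have hp : monomial (planeExponent i j) (1 : K) ∈
        (homogeneousMonomialIdeal K d A ^ (n + 1)).colon (homogeneousMonomialIdeal K d A) := by
      rw [mem_colon_homogeneousMonomialIdeal hA]
      simpa [coeff_monomial] using hij
    rw [h, mem_homogeneousMonomialIdeal_pow hA] at hp
    simpa using hp (planeExponent i j) (by simp)
  · intro h
    refine le_antisymm (fun p hp => ?_) (fun p hp => ?_)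
    · rw [mem_colon_homogeneousMonomialIdeal hA] at hp
      exact (mem_homogeneousMonomialIdeal_pow hA n p).2 fun m hm => h _ _ (hp m hm)
    · exact Submodule.mem_colon.2 fun q hq => pow_succ (homogeneousMonomialIdeal K d A) n ▸
        Ideal.mul_mem_mul hp hq

end

theorem isPowExponent_of_le_left {d : ℕ} {A : Finset ℕ} {n : ℕ}
    (h : d * n ∈ iteratedSumset A n) {i : ℕ} (hi : d * n ≤ i) (j : ℕ) :
    IsPowExponent d A n i j :=
  ⟨d * n, h, hi, Nat.le_add_right _ _⟩

theorem isPowExponent_of_le_right {d : ℕ} {A : Finset ℕ} {n : ℕ}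
    (h : 0 ∈ iteratedSumset A n) (i : ℕ) {j : ℕ} (hj : d * n ≤ j) :
    IsPowExponent d A n i j :=
  ⟨0, h, Nat.zero_le _, by omega⟩

/-- If `J` contains `x ^ d` and `y ^ d`, the equality `(J ^ (n + 1) : J) = J ^ n` is a finite
condition. -/
theorem colon_homogeneousMonomialIdeal_pow_eq {K : Type*} [Field K] {d : ℕ} {A : Finset ℕ}
    (hA : ∀ a ∈ A, a ≤ d) {n : ℕ} (h₀ : 0 ∈ iteratedSumset A n)
    (h₁ : d * n ∈ iteratedSumset A n)
    (h : ∀ i < d * n, ∀ j < d * n, (∀ a ∈ A, IsPowExponent d A (n + 1) (i + a) (j + (d - a))) →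
      IsPowExponent d A n i j) :
    (homogeneousMonomialIdeal K d A ^ (n + 1)).colon (homogeneousMonomialIdeal K d A) =
      homogeneousMonomialIdeal K d A ^ n := by
  refine (colon_homogeneousMonomialIdeal_pow_eq_iff hA n).2 fun i j hij => ?_
  rcases le_or_gt (d * n) i with hi | hi
  · exact isPowExponent_of_le_left h₁ hi j
  rcases le_or_gt (d * n) j with hj | hj
  · exact isPowExponent_of_le_right h₀ i hj
  exact h i hi j hj hij

theorem stmt_18 {K : Type*} [Field K] (J : Ideal (MvPolynomial (Fin 2) K))
    (hJ : J = Ideal.span {X 0 ^ 7, X 1 ^ 7, X 0 ^ 2 * X 1 ^ 5, X 0 ^ 5 * X 1 ^ 2}) :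
    (J ^ 2).colon J ≠ J ∧ (J ^ 3).colon J = J ^ 2 ∧ (J ^ 4).colon J ≠ J ^ 3 ∧
      (J ^ 5).colon J = J ^ 4 ∧ HasFluctuationInColonPowers J := by
  have hA : ∀ a ∈ ({0, 2, 5, 7} : Finset ℕ), a ≤ 7 := by decide
  have hJ' : J = homogeneousMonomialIdeal K 7 {0, 2, 5, 7} := by
    rw [hJ, homogeneousMonomialIdeal]
    congr 1
    have hm (i j : ℕ) : monomial (planeExponent i j) (1 : K) = X 0 ^ i * X 1 ^ j := by
      simp [planeExponent, X_pow_eq_monomial, monomial_mul]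
    simp only [Finset.coe_insert, Finset.coe_singleton, Set.image_insert_eq, Set.image_singleton,
      hm]
    ext p
    simp only [Set.mem_insert_iff, Set.mem_singleton_iff, Nat.sub_zero, Nat.sub_self,
      Nat.reduceSub, pow_zero, one_mul, mul_one]
    rw [or_comm, or_assoc, or_assoc]
  subst hJ'
  have h₂ := (colon_homogeneousMonomialIdeal_pow_eq_iff (K := K) hA 1).not.2
    fun h => absurd (h 4 4) (by decide +kernel)
  have h₃ := colon_homogeneousMonomialIdeal_pow_eq (K := K) hA (n := 2) (by decide) (by decide)
    (by decide +kernel)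
  have h₄ := (colon_homogeneousMonomialIdeal_pow_eq_iff (K := K) hA 3).not.2
    fun h => absurd (h 8 13) (by decide +kernel)
  have h₅ := colon_homogeneousMonomialIdeal_pow_eq (K := K) hA (n := 4) (by decide +kernel)
    (by decide +kernel) (by decide +kernel)
  exact ⟨by simpa using h₂, h₃, h₄, h₅, 2, 3, 4, by norm_num, by norm_num, by norm_num,
    Or.inr ⟨h₂, h₃, h₄⟩⟩
end

section
/- Let K be a field, R = K[x,y], and I = (x^6, y^6, x y^5, x^5 y, x^4 y^4) ⊂ R. Then (I^2 : I) = I, (I^3 : I) ≠ I^2, (I^4 : I) ≠ I^3, and (I^5 : I) = I^4; in particular I has the phenomenon of fluctuation in colon powers. -/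
open MvPolynomial

namespace MonomialIdealPlane

/-- The exponent vector of `x ^ p.1 * y ^ p.2`. -/
noncomputable def exponent (p : ℕ × ℕ) : Fin 2 →₀ ℕ :=
  Finsupp.single 0 p.1 + Finsupp.single 1 p.2

theorem exponent_add (p q : ℕ × ℕ) : exponent (p + q) = exponent p + exponent q := by
  simp only [exponent, Prod.fst_add, Prod.snd_add, Finsupp.single_add]
  abel

theorem exponent_le_iff {p : ℕ × ℕ} {m : Fin 2 →₀ ℕ} : exponent p ≤ m ↔ p ≤ (m 0, m 1) := by
  simp [Finsupp.le_def, Fin.forall_fin_two, exponent, Prod.le_def]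

theorem exponent_le_exponent {p q : ℕ × ℕ} : exponent p ≤ exponent q ↔ p ≤ q := by
  rw [exponent_le_iff]
  simp [exponent]

theorem monomial_exponent (K : Type*) [CommSemiring K] (p : ℕ × ℕ) :
    monomial (exponent p) (1 : K) = X 0 ^ p.1 * X 1 ^ p.2 := by
  simp [exponent, X_pow_eq_monomial, monomial_mul]

/-- The ideal of `K[x, y]` generated by the monomials with exponents in `S`. -/
noncomputable def monomialIdeal (K : Type*) [CommSemiring K] (S : Finset (ℕ × ℕ)) :
    Ideal (MvPolynomial (Fin 2) K) :=
  Ideal.span ((fun m => monomial m (1 : K)) '' (exponent '' (S : Set (ℕ × ℕ))))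

section CommSemiring

variable {K : Type*} [CommSemiring K] {S T U : Finset (ℕ × ℕ)}

theorem mem_monomialIdeal {f : MvPolynomial (Fin 2) K} :
    f ∈ monomialIdeal K S ↔ ∀ m ∈ f.support, ∃ s ∈ S, s ≤ (m 0, m 1) := by
  simp [monomialIdeal, mem_ideal_span_monomial_image, exponent_le_iff]

theorem monomial_mem_monomialIdeal [Nontrivial K] {p : ℕ × ℕ} :
    monomial (exponent p) (1 : K) ∈ monomialIdeal K S ↔ ∃ s ∈ S, s ≤ p := by
  classical
  simp [monomialIdeal, mem_ideal_span_monomial_image, support_monomial, exponent_le_exponent]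

theorem monomial_mem_of_le {p : ℕ × ℕ} (h : ∃ s ∈ S, s ≤ p) :
    monomial (exponent p) (1 : K) ∈ monomialIdeal K S := by
  nontriviality K
  exact monomial_mem_monomialIdeal.2 h

theorem monomialIdeal_le_iff {J : Ideal (MvPolynomial (Fin 2) K)} :
    monomialIdeal K S ≤ J ↔ ∀ s ∈ S, monomial (exponent s) (1 : K) ∈ J := by
  rw [monomialIdeal, Ideal.span_le, Set.image_image, Set.image_subset_iff]
  rfl

theorem monomialIdeal_mul_eq (hle : ∀ s ∈ S, ∀ t ∈ T, ∃ u ∈ U, u ≤ s + t)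
    (hge : ∀ u ∈ U, ∃ s ∈ S, ∃ t ∈ T, s + t ≤ u) :
    monomialIdeal K S * monomialIdeal K T = monomialIdeal K U := by
  apply le_antisymm
  · rw [monomialIdeal, monomialIdeal, Ideal.span_mul_span', Ideal.span_le]
    rintro _ ⟨_, ⟨_, ⟨s, hs, rfl⟩, rfl⟩, _, ⟨_, ⟨t, ht, rfl⟩, rfl⟩, rfl⟩
    simp only [monomial_mul, one_mul, ← exponent_add]
    exact monomial_mem_of_le (hle s hs t ht)
  · rw [monomialIdeal_le_iff]
    intro u hu
    obtain ⟨s, hs, t, ht, hst⟩ := hge u hu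
    obtain ⟨c, rfl⟩ := exists_add_of_le hst
    have h := Ideal.mul_mem_right (monomial (exponent c) (1 : K)) _ (Ideal.mul_mem_mul
      (monomial_mem_of_le (K := K) ⟨s, hs, le_rfl⟩) (monomial_mem_of_le (K := K) ⟨t, ht, le_rfl⟩))
    simpa [monomial_mul, exponent_add] using h

theorem mem_colon_monomialIdeal_iff {J : Ideal (MvPolynomial (Fin 2) K)}
    {f : MvPolynomial (Fin 2) K} :
    f ∈ J.colon (monomialIdeal K T) ↔ ∀ t ∈ T, f * monomial (exponent t) 1 ∈ J := by
  rw [monomialIdeal, Ideal.colon_span, Submodule.mem_colon, Set.image_image, Set.forall_mem_image]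
  rfl

theorem monomial_mem_colon {p : ℕ × ℕ} (h : ∀ t ∈ T, ∃ s ∈ S, s ≤ p + t) :
    monomial (exponent p) (1 : K) ∈ (monomialIdeal K S).colon (monomialIdeal K T) := by
  rw [mem_colon_monomialIdeal_iff]
  intro t ht
  rw [monomial_mul, one_mul, ← exponent_add]
  exact monomial_mem_of_le (h t ht)

theorem colon_monomialIdeal_le
    (h : ∀ p : ℕ × ℕ, (∀ t ∈ T, ∃ s ∈ S, s ≤ p + t) → ∃ u ∈ U, u ≤ p) :
    (monomialIdeal K S).colon (monomialIdeal K T) ≤ monomialIdeal K U := by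
  intro f hf
  rw [mem_colon_monomialIdeal_iff] at hf
  rw [mem_monomialIdeal]
  intro m hm
  refine h _ fun t ht => ?_
  have hmt : m + exponent t ∈ (f * monomial (exponent t) 1).support := by
    rw [mem_support_iff, coeff_mul_monomial, mul_one]
    exact mem_support_iff.1 hm
  simpa [exponent, Prod.le_def] using mem_monomialIdeal.1 (hf t ht) _ hmt

end CommSemiring

theorem pow_le_pow_succ_colon {R : Type*} [CommSemiring R] (I : Ideal R) (n : ℕ) :
    I ^ n ≤ (I ^ (n + 1)).colon I := by
  intro f hf
  rw [Submodule.mem_colon]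
  intro g hg
  rw [pow_succ]
  exact Ideal.mul_mem_mul hf hg

/-- Exponents of the generators of `(x^6, y^6, xy^5, x^5y, x^4y^4)`. -/
def gens : Finset (ℕ × ℕ) := {(6, 0), (0, 6), (1, 5), (5, 1), (4, 4)}

/-- Exponents of the minimal generators of `(x^6, y^6, xy^5, x^5y, x^4y^4)^2`. -/
def sqGens : Finset (ℕ × ℕ) :=
  {(0, 12), (1, 11), (2, 10), (5, 7), (6, 6), (7, 5), (10, 2), (11, 1), (12, 0)}

/-- Exponents of the minimal generators of `(x^6, y^6, xy^5, x^5y, x^4y^4)^3`. -/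
def cubeGens : Finset (ℕ × ℕ) :=
  {(0, 18), (1, 17), (2, 16), (3, 15), (5, 13), (6, 12), (7, 11), (8, 10), (10, 8), (11, 7),
    (12, 6), (13, 5), (15, 3), (16, 2), (17, 1), (18, 0)}

section Powers

variable (K : Type*) [CommSemiring K]

theorem monomialIdeal_gens : monomialIdeal K gens =
    Ideal.span {X 0 ^ 6, X 1 ^ 6, X 0 * X 1 ^ 5, X 0 ^ 5 * X 1, X 0 ^ 4 * X 1 ^ 4} := by
  simp [monomialIdeal, gens, Set.image_insert_eq, monomial_exponent]

theorem monomialIdeal_gens_sq : monomialIdeal K gens ^ 2 = monomialIdeal K sqGens := by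
  rw [sq]
  exact monomialIdeal_mul_eq (by decide +kernel) (by decide +kernel)

theorem monomialIdeal_gens_cube : monomialIdeal K gens ^ 3 = monomialIdeal K cubeGens := by
  rw [pow_succ, monomialIdeal_gens_sq]
  exact monomialIdeal_mul_eq (by decide +kernel) (by decide +kernel)

theorem monomialIdeal_gens_pow_four :
    monomialIdeal K gens ^ 4 = monomialIdeal K (Finset.HasAntidiagonal.antidiagonal 24) := by
  rw [pow_succ, monomialIdeal_gens_cube]
  exact monomialIdeal_mul_eq (by decide +kernel) (by decide +kernel)

theorem monomialIdeal_gens_pow_five :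
    monomialIdeal K gens ^ 5 = monomialIdeal K (Finset.HasAntidiagonal.antidiagonal 30) := by
  rw [pow_succ, monomialIdeal_gens_pow_four]
  exact monomialIdeal_mul_eq (by decide +kernel) (by decide +kernel)

theorem sq_colon : (monomialIdeal K gens ^ 2).colon (monomialIdeal K gens) =
    monomialIdeal K gens := by
  refine le_antisymm ?_ (by simpa using pow_le_pow_succ_colon (monomialIdeal K gens) 1)
  rw [monomialIdeal_gens_sq]
  refine colon_monomialIdeal_le ?_
  rintro ⟨a, b⟩ h
  rcases le_or_gt 6 a with ha | ha
  · exact ⟨(6, 0), by decide, ha, b.zero_le⟩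
  rcases le_or_gt 6 b with hb | hb
  · exact ⟨(0, 6), by decide, a.zero_le, hb⟩
  have key : ∀ a < 6, ∀ b < 6, (∀ t ∈ gens, ∃ s ∈ sqGens, s ≤ (a, b) + t) →
      ∃ u ∈ gens, u ≤ (a, b) := by decide +kernel
  exact key a ha b hb h

theorem pow_five_colon : (monomialIdeal K gens ^ 5).colon (monomialIdeal K gens) =
    monomialIdeal K gens ^ 4 := by
  refine le_antisymm ?_ (pow_le_pow_succ_colon _ 4)
  rw [monomialIdeal_gens_pow_four, monomialIdeal_gens_pow_five]
  refine colon_monomialIdeal_le ?_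
  rintro ⟨a, b⟩ h
  obtain ⟨⟨c, d⟩, hs, hc, hd⟩ := h (6, 0) (by decide)
  simp only [Finset.HasAntidiagonal.mem_antidiagonal] at hs
  simp only [Prod.mk_add_mk] at hc hd
  exact ⟨(min a 24, 24 - min a 24), by simp, min_le_left _ _, show 24 - min a 24 ≤ b by omega⟩

variable [Nontrivial K]

theorem cube_colon_ne : (monomialIdeal K gens ^ 3).colon (monomialIdeal K gens) ≠
    monomialIdeal K gens ^ 2 := by
  rw [monomialIdeal_gens_cube, monomialIdeal_gens_sq]
  intro h
  have hmem : monomial (exponent (4, 9)) (1 : K) ∈ monomialIdeal K sqGens :=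
    h ▸ monomial_mem_colon (by decide +kernel)
  exact absurd (monomial_mem_monomialIdeal.1 hmem) (by decide +kernel)

theorem pow_four_colon_ne : (monomialIdeal K gens ^ 4).colon (monomialIdeal K gens) ≠
    monomialIdeal K gens ^ 3 := by
  rw [monomialIdeal_gens_pow_four, monomialIdeal_gens_cube]
  intro h
  have hmem : monomial (exponent (9, 9)) (1 : K) ∈ monomialIdeal K cubeGens :=
    h ▸ monomial_mem_colon (by decide +kernel)
  exact absurd (monomial_mem_monomialIdeal.1 hmem) (by decide +kernel)

end Powers

end MonomialIdealPlane

theorem stmt_19 {K : Type*} [Field K] (I : Ideal (MvPolynomial (Fin 2) K))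
    (hI : I = Ideal.span {X 0 ^ 6, X 1 ^ 6, X 0 * X 1 ^ 5, X 0 ^ 5 * X 1, X 0 ^ 4 * X 1 ^ 4}) :
    (I ^ 2).colon I = I ∧ (I ^ 3).colon I ≠ I ^ 2 ∧ (I ^ 4).colon I ≠ I ^ 3 ∧
      (I ^ 5).colon I = I ^ 4 ∧ HasFluctuationInColonPowers I := by
  rw [← MonomialIdealPlane.monomialIdeal_gens] at hI
  subst hI
  have h2 := MonomialIdealPlane.sq_colon K
  have h3 := MonomialIdealPlane.cube_colon_ne K
  have h5 := MonomialIdealPlane.pow_five_colon K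
  exact ⟨h2, h3, MonomialIdealPlane.pow_four_colon_ne K, h5, 2, 3, 5, by norm_num, by norm_num,
    by norm_num, Or.inl ⟨by simpa using h2, h3, h5⟩⟩
end
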